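/- arXiv:0807.1967 — 2 statements merged into one kernel-verified Lean document; each statement's English description precedes it below -/
import Mathlib

section
/- Let D ⊆ ℝ[X₁,…,Xₙ]\{0} be a multiplicatively closed set with 1 ∈ D, let E = D⁻¹ℝ[X₁,…,Xₙ], and let S ⊆ ℝ[X₁,…,Xₙ] be finite with K_S ≠ ∅. Assume there exist p ∈ D and an integer k ≥ 1 such that p ≥ 1 on K_S and k·p − (X₁²+⋯+Xₙ²) ≥ 0 on K_S. Then the closure of T_S^E in the topology of finitely open sets on E equals Pos^E(K_S). -/
/-!
*The set `PosE` is closed.* In a finite-dimensional subspace of `E` all elements share a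
denominator, and `f / d` lies in `PosE` iff `f d ≥ 0` at every point of `KS` where some `e ∈ D`
does not vanish. The exceptional denominator `e` varies along a convergent sequence, so a point is
needed at which countably many elements of `D` are nonzero and a given polynomial, negative at
some point of `{e ≠ 0} ∩ KS` for every `e ∈ D`, is negative. An ultrafilter provides an ordering
of `ℝ[X]` with these properties, hence a homomorphism to a real closed field, and the theorem of
Artin and Lang turns it into a real point; countably many conditions `e ≠ 0` survive because `ℝ`
is uncountable.

*The preordering `T` is dense.* Let `h ≥ 0` on `KS`. By the Positivstellensatz the growth hypothesis
has a certificate in `T`, and as in Wörmann's trick this certificate bounds a power `w` of `1 / p`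
and all `Xᵢ w` by constants with respect to `T`. The elements bounded in this sense form an algebra
`A` containing `h wˡ` for some `l`. At a point of the real spectrum of `A` where `T ≥ 0`, either
`w = 0` or the point comes from one of `ℝ[X]` over `KS`, so `h wˡ⁺¹ + ε` is positive for each
`ε > 0`; a bounded element which is positive at all these points lies in `T`. Dividing by `wˡ⁺¹`
shows `h + ε w⁻⁽ˡ⁺¹⁾ ∈ T`, a segment ending in `h`.

*The theorem of Artin and Lang.* The number of roots of `p` at which given polynomials have given
signs is a combination of Cauchy indices, by Tarski and Sturm, and these are computed by the
Euclidean algorithm. So it depends only on the signs of finitely many expressions in the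
coefficients, and points can be moved between real closed fields one coordinate at a time.
-/

open MvPolynomial MeasureTheory

noncomputable section

/-- The Euclidean (weak) topology on a real vector space; for finite-dimensional
spaces this is the usual Euclidean topology. -/
def weakTop (V : Type*) [AddCommGroup V] [Module ℝ V] : TopologicalSpace V :=
  ⨅ L : V →ₗ[ℝ] ℝ, TopologicalSpace.induced L inferInstance

/-- The topology of finitely open sets: `O` is open iff its intersection with every
finite-dimensional subspace `U` is open in the Euclidean topology of `U`. -/
def finTop (E : Type*) [AddCommGroup E] [Module ℝ E] : TopologicalSpace E where
  IsOpen O := ∀ U : Submodule ℝ E, FiniteDimensional ℝ U →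
    @IsOpen _ (weakTop U) ((Subtype.val : U → E) ⁻¹' O)
  isOpen_univ := by
    intro U _
    letI := weakTop U
    rw [Set.preimage_univ]
    exact isOpen_univ
  isOpen_inter := by
    intro s t hs ht U hU
    letI := weakTop U
    rw [Set.preimage_inter]
    exact (hs U hU).inter (ht U hU)
  isOpen_sUnion := by
    intro s hs U hU
    letI := weakTop U
    rw [Set.preimage_sUnion]
    exact isOpen_biUnion fun t ht => hs t ht U hU

/-- The closure of a convex cone in the finest locally convex topology, via the dual
characterization: `x` lies in the closure iff `L x ≥ 0` for every linear functional `L`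
nonnegative on the cone. -/
def dualClosure {E : Type*} [AddCommGroup E] [Module ℝ E] (C : Set E) : Set E :=
  {x | ∀ L : E →ₗ[ℝ] ℝ, (∀ c ∈ C, 0 ≤ L c) → 0 ≤ L x}

/-- The preordering generated by `g 1, …, g m` in a commutative ring: all finite sums
of elements `σ • g₁^ν₁ ⋯ g_m^ν_m` with `σ` a sum of squares and `ν ∈ {0,1}^m`. -/
def genPreordering {E : Type*} [CommRing E] {m : ℕ} (g : Fin m → E) : Set E :=
  {x | ∃ σ : (Fin m → Bool) → E, (∀ ν, IsSumSq (σ ν)) ∧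
    x = ∑ ν : Fin m → Bool, σ ν * ∏ j, (if ν j then g j else 1)}

/-- The basic closed semialgebraic set determined by `g 1, …, g m`. -/
def KS {n m : ℕ} (g : Fin m → MvPolynomial (Fin n) ℝ) : Set (Fin n → ℝ) :=
  {x | ∀ i, 0 ≤ eval x (g i)}

/-- The real zero set of a polynomial. -/
def Zset {n : ℕ} (d : MvPolynomial (Fin n) ℝ) : Set (Fin n → ℝ) :=
  {x | eval x d = 0}

/-- `Pos^E(𝒳)`: elements of the localization having a representation `f/d` with
`f·d ≥ 0 pointwise on 𝒳`. -/
def PosE {n : ℕ} (D : Submonoid (MvPolynomial (Fin n) ℝ)) (X : Set (Fin n → ℝ)) :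
    Set (Localization D) :=
  {R | ∃ (f : MvPolynomial (Fin n) ℝ) (d : D), R = Localization.mk f d ∧
    ∀ x ∈ X, 0 ≤ eval x f * eval x (d : MvPolynomial (Fin n) ℝ)}

namespace RealAlgebra

section PolynomialIVT

/-- An ordered field with the intermediate value property for polynomials. These are exactly the
real closed fields. -/
class PolynomialIVT (R : Type*) [Field R] [LinearOrder R] : Prop where
  exists_isRoot : ∀ (f : Polynomial R) (a b : R), a ≤ b → f.eval a * f.eval b < 0 →
    ∃ c ∈ Set.Icc a b, f.IsRoot c

instance : PolynomialIVT ℝ where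
  exists_isRoot f a b hab h := by
    have hc : ContinuousOn (fun x => f.eval x) (Set.uIcc a b) := f.continuous.continuousOn
    have h0 : (0 : ℝ) ∈ Set.uIcc (f.eval a) (f.eval b) := by
      rcases mul_neg_iff.1 h with ⟨ha, hb⟩ | ⟨ha, hb⟩
      · exact Set.mem_uIcc_of_ge hb.le ha.le
      · exact Set.mem_uIcc_of_le ha.le hb.le
    obtain ⟨c, hcab, hc0⟩ := intermediate_value_uIcc hc h0
    exact ⟨c, Set.uIcc_of_le hab ▸ hcab, hc0⟩

variable {R : Type*} [Field R] [LinearOrder R] [IsStrictOrderedRing R]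

lemma sign_eval_eq_of_forall_not_isRoot [PolynomialIVT R] {f : Polynomial R} {a b : R}
    (hab : a ≤ b) (hf : ∀ x ∈ Set.Icc a b, ¬ f.IsRoot x) :
    SignType.sign (f.eval a) = SignType.sign (f.eval b) := by
  have ha : f.eval a ≠ 0 := hf a (Set.left_mem_Icc.2 hab)
  have hb : f.eval b ≠ 0 := hf b (Set.right_mem_Icc.2 hab)
  have h : 0 < f.eval a * f.eval b := by
    refine (mul_ne_zero ha hb).lt_or_gt.resolve_left fun hlt => ?_
    obtain ⟨c, hc, hroot⟩ := PolynomialIVT.exists_isRoot f a b hab hlt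
    exact hf c hc hroot
  rcases mul_pos_iff.1 h with ⟨ha, hb⟩ | ⟨ha, hb⟩
  · rw [sign_pos ha, sign_pos hb]
  · rw [sign_neg ha, sign_neg hb]

lemma exists_forall_ge_le_eval {f : Polynomial R} (hf : 0 < f.leadingCoeff) :
    ∃ M, ∃ ε > 0, ∀ x ≥ M, ε ≤ f.eval x := by
  induction hd : f.natDegree generalizing f with
  | zero =>
    rw [Polynomial.eq_C_of_natDegree_eq_zero hd] at hf ⊢
    rw [Polynomial.leadingCoeff_C] at hf
    exact ⟨0, _, hf, fun x _ => by rw [Polynomial.eval_C]⟩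
  | succ d ih =>
    have hlead : f.divX.leadingCoeff = f.leadingCoeff := by
      rw [Polynomial.leadingCoeff, Polynomial.natDegree_divX_eq_natDegree_tsub_one,
        Polynomial.coeff_divX, Polynomial.leadingCoeff, hd, Nat.add_sub_cancel]
    obtain ⟨M, ε, hε, hM⟩ := ih (f := f.divX) (hlead ▸ hf) (by
      rw [Polynomial.natDegree_divX_eq_natDegree_tsub_one, hd, Nat.add_sub_cancel])
    refine ⟨max M (max 0 ((ε - f.coeff 0) / ε)), ε, hε, fun x hx => ?_⟩
    simp only [ge_iff_le, max_le_iff, div_le_iff₀ hε] at hx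
    obtain ⟨hxM, hx0, hxε⟩ := hx
    have heval : f.eval x = x * f.divX.eval x + f.coeff 0 := by
      conv_lhs => rw [← f.X_mul_divX_add]
      simp only [Polynomial.eval_add, Polynomial.eval_mul, Polynomial.eval_X, Polynomial.eval_C]
    linarith [mul_le_mul_of_nonneg_left (hM x hxM) hx0]

lemma exists_forall_ge_sign_eval_eq (f : Polynomial R) :
    ∃ M, ∀ x ≥ M, SignType.sign (f.eval x) = SignType.sign f.leadingCoeff := by
  rcases lt_trichotomy f.leadingCoeff 0 with hf | hf | hf
  · obtain ⟨M, ε, hε, hM⟩ := exists_forall_ge_le_eval (f := -f) (by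
      rwa [Polynomial.leadingCoeff_neg, neg_pos])
    refine ⟨M, fun x hx => ?_⟩
    have := hM x hx
    rw [Polynomial.eval_neg] at this
    rw [sign_neg hf, sign_neg (by linarith)]
  · refine ⟨0, fun x _ => ?_⟩
    rw [hf, Polynomial.leadingCoeff_eq_zero.1 hf, Polynomial.eval_zero]
  · obtain ⟨M, ε, hε, hM⟩ := exists_forall_ge_le_eval hf
    exact ⟨M, fun x hx => by rw [sign_pos hf, sign_pos (hε.trans_le (hM x hx))]⟩

lemma exists_forall_le_sign_eval_eq (f : Polynomial R) :
    ∃ M, ∀ x ≤ M, SignType.sign (f.eval x) =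
      SignType.sign f.leadingCoeff * (-1) ^ f.natDegree := by
  obtain ⟨M, hM⟩ := exists_forall_ge_sign_eval_eq (f.comp (-Polynomial.X))
  refine ⟨-M, fun x hx => ?_⟩
  have h := hM (-x) (le_neg_of_le_neg hx)
  rw [Polynomial.leadingCoeff_comp (by simp)] at h
  simpa [sign_mul, sign_pow, Left.sign_neg] using h

lemma exists_isRoot_of_odd_natDegree [PolynomialIVT R] {f : Polynomial R}
    (hf : Odd f.natDegree) : ∃ x, f.IsRoot x := by
  by_contra! hroot
  obtain ⟨M, hM⟩ := exists_forall_ge_sign_eval_eq f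
  obtain ⟨N, hN⟩ := exists_forall_le_sign_eval_eq f
  have h : SignType.sign (f.eval (min M N)) = SignType.sign (f.eval M) :=
    sign_eval_eq_of_forall_not_isRoot (min_le_left M N) fun x _ => hroot x
  rw [hM M le_rfl, hN _ (min_le_right M N), hf.neg_one_pow] at h
  have hf0 : f.leadingCoeff ≠ 0 := by
    rw [Polynomial.leadingCoeff_ne_zero]
    rintro rfl
    simp at hf
  rcases hf0.lt_or_gt with h0 | h0
  · rw [sign_neg h0] at h
    exact absurd h (by decide)
  · rw [sign_pos h0] at h
    exact absurd h (by decide)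

end PolynomialIVT

section Jump

open scoped Polynomial

variable {R : Type*} [Field R]

lemma exists_eq_X_sub_C_pow_mul {f : R[X]} (hf : f ≠ 0) (x : R) :
    ∃ (m : ℕ) (u : R[X]), u.eval x ≠ 0 ∧ f = (Polynomial.X - Polynomial.C x) ^ m * u := by
  obtain ⟨u, hu, hdvd⟩ := Polynomial.exists_eq_pow_rootMultiplicity_mul_and_not_dvd f hf x
  exact ⟨_, u, fun h => hdvd (Polynomial.dvd_iff_isRoot.2 h), hu⟩

lemma rootMultiplicity_X_sub_C_pow_mul {x : R} {u : R[X]} (hu : u.eval x ≠ 0) (m : ℕ) :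
    ((Polynomial.X - Polynomial.C x) ^ m * u).rootMultiplicity x = m := by
  have hu0 : u ≠ 0 := by rintro rfl; simp at hu
  rw [mul_comm, Polynomial.rootMultiplicity_mul_X_sub_C_pow hu0,
    Polynomial.rootMultiplicity_eq_zero hu, zero_add]

lemma X_sub_C_pow_dvd_X_sub_C_pow_mul_iff {x : R} {u : R[X]} (hu : u.eval x ≠ 0) {m a : ℕ} :
    (Polynomial.X - Polynomial.C x) ^ a ∣ (Polynomial.X - Polynomial.C x) ^ m * u ↔ a ≤ m := by
  have hu0 : u ≠ 0 := by rintro rfl; simp at hu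
  rw [← Polynomial.le_rootMultiplicity_iff
    (mul_ne_zero (pow_ne_zero _ (Polynomial.X_sub_C_ne_zero x)) hu0),
    rootMultiplicity_X_sub_C_pow_mul hu]

variable [LinearOrder R]

/-- Half the change of sign of `f` at `x`: if `f = (X - x) ^ m * u` with `u x ≠ 0`, this is the
sign of `u x` for `m` odd, and `0` for `m` even. -/
def jump (f : R[X]) (x : R) : ℤ :=
  if Odd (f.rootMultiplicity x) then
    SignType.sign
      ((f /ₘ (Polynomial.X - Polynomial.C x) ^ f.rootMultiplicity x).eval x)
  else 0

lemma jump_X_sub_C_pow_mul {x : R} {u : R[X]} (hu : u.eval x ≠ 0) (m : ℕ) :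
    jump ((Polynomial.X - Polynomial.C x) ^ m * u) x =
      if Odd m then (SignType.sign (u.eval x) : ℤ) else 0 := by
  rw [jump, rootMultiplicity_X_sub_C_pow_mul hu, Polynomial.mul_divByMonic_cancel_left _
    ((Polynomial.monic_X_sub_C x).pow m)]

@[simp]
lemma jump_zero (x : R) : jump 0 x = 0 := by
  simp [jump]

lemma jump_eq_zero {f : R[X]} {x : R} (hx : ¬ f.IsRoot x) : jump f x = 0 := by
  rw [jump, Polynomial.rootMultiplicity_eq_zero hx, if_neg (by decide)]

variable [IsStrictOrderedRing R]

lemma jump_C_mul (c : R) (f : R[X]) (x : R) :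
    jump (Polynomial.C c * f) x = SignType.sign c * jump f x := by
  rcases eq_or_ne c 0 with rfl | hc
  · simp
  rcases eq_or_ne f 0 with rfl | hf
  · simp
  obtain ⟨m, u, hu, rfl⟩ := exists_eq_X_sub_C_pow_mul hf x
  have hcu : (Polynomial.C c * u).eval x ≠ 0 := by simpa using ⟨hc, hu⟩
  rw [mul_left_comm, jump_X_sub_C_pow_mul hcu, jump_X_sub_C_pow_mul hu, Polynomial.eval_mul,
    Polynomial.eval_C, sign_mul, mul_ite, mul_zero, SignType.coe_mul]

lemma jump_X_sub_C_mul_of_lt (f : R[X]) {x y : R} (hxy : x < y) :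
    jump ((Polynomial.X - Polynomial.C y) * f) x = -jump f x := by
  rcases eq_or_ne f 0 with rfl | hf
  · simp
  obtain ⟨m, u, hu, rfl⟩ := exists_eq_X_sub_C_pow_mul hf x
  have hyu : ((Polynomial.X - Polynomial.C y) * u).eval x ≠ 0 := by
    simpa [sub_eq_zero] using ⟨hxy.ne, hu⟩
  rw [mul_left_comm, jump_X_sub_C_pow_mul hyu, jump_X_sub_C_pow_mul hu, Polynomial.eval_mul,
    Polynomial.eval_sub, Polynomial.eval_X, Polynomial.eval_C, sign_mul,
    sign_neg (sub_neg.2 hxy)]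
  split_ifs <;> simp

variable [PolynomialIVT R]

lemma jump_X_sub_C_mul_self {f : R[X]} (hf : f ≠ 0) {x : R} (hx : ∀ y > x, ¬ f.IsRoot y) :
    jump ((Polynomial.X - Polynomial.C x) * f) x + jump f x =
      SignType.sign f.leadingCoeff := by
  obtain ⟨m, u, hu, rfl⟩ := exists_eq_X_sub_C_pow_mul hf x
  have hsign : SignType.sign (u.eval x) = SignType.sign u.leadingCoeff := by
    obtain ⟨M, hM⟩ := exists_forall_ge_sign_eval_eq u
    rw [← hM _ (le_max_left M x)]
    refine sign_eval_eq_of_forall_not_isRoot (le_max_right M x) fun y hy hroot => ?_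
    rcases hy.1.eq_or_lt with rfl | hlt
    · exact hu hroot
    · exact hx y hlt (Polynomial.root_mul_left_of_isRoot _ hroot)
  rw [← mul_assoc, ← pow_succ', jump_X_sub_C_pow_mul hu, jump_X_sub_C_pow_mul hu, hsign,
    Polynomial.leadingCoeff_monic_mul ((Polynomial.monic_X_sub_C x).pow m)]
  by_cases hm : Odd m
  · simp [hm, Nat.odd_add_one]
  · simp [hm, Nat.odd_add_one]

theorem sum_jump {f : R[X]} (hf : f ≠ 0) {s : Finset R} (hs : ∀ x, f.IsRoot x → x ∈ s) :
    ∑ x ∈ s, jump f x =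
      if Odd f.natDegree then (SignType.sign f.leadingCoeff : ℤ) else 0 := by
  induction hd : f.natDegree using Nat.strong_induction_on generalizing f with
  | _ d ih =>
    by_cases hroot : ∃ x, f.IsRoot x
    · obtain ⟨x, hx, hmax⟩ : ∃ x, f.IsRoot x ∧ ∀ y > x, ¬ f.IsRoot y := by
        obtain ⟨x, hx⟩ := (Polynomial.finite_setOfPred_isRoot hf).exists_maximal hroot
        exact ⟨x, hx.prop, fun y hy hroot => hx.not_prop_of_gt hy hroot⟩
      obtain ⟨h, rfl⟩ := Polynomial.dvd_iff_isRoot.2 hx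
      have hh : h ≠ 0 := right_ne_zero_of_mul hf
      have hdeg : d = h.natDegree + 1 := by
        rw [← hd, Polynomial.natDegree_mul (Polynomial.X_sub_C_ne_zero x) hh,
          Polynomial.natDegree_X_sub_C, add_comm]
      have hroot_mul : ∀ y, h.IsRoot y → ((Polynomial.X - Polynomial.C x) * h).IsRoot y :=
        fun y => Polynomial.root_mul_left_of_isRoot _
      have hsum : ∑ y ∈ s, (jump ((Polynomial.X - Polynomial.C x) * h) y + jump h y) =
          SignType.sign h.leadingCoeff := by
        rw [Finset.sum_eq_single_of_mem x (hs x hx), jump_X_sub_C_mul_self hh fun y hy hroot =>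
          hmax y hy (hroot_mul y hroot)]
        intro y _ hyx
        rcases hyx.lt_or_gt with hlt | hgt
        · rw [jump_X_sub_C_mul_of_lt h hlt, neg_add_cancel]
        · rw [jump_eq_zero (hmax y hgt), jump_eq_zero fun hroot =>
            hmax y hgt (hroot_mul y hroot), add_zero]
      rw [Finset.sum_add_distrib, ih h.natDegree (by omega) hh (fun y hy => hs y (hroot_mul y hy))
        rfl] at hsum
      rw [Polynomial.leadingCoeff_monic_mul (Polynomial.monic_X_sub_C x),
        eq_sub_of_add_eq hsum]
      simp only [hdeg, Nat.odd_add_one]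
      split_ifs <;> simp
    · have heven : ¬ Odd d := fun hodd => hroot (exists_isRoot_of_odd_natDegree (hd ▸ hodd))
      rw [if_neg heven]
      exact Finset.sum_eq_zero fun x _ => jump_eq_zero fun hx => hroot ⟨x, hx⟩

end Jump

section CauchyIndex

open scoped Polynomial

variable {R : Type*} [Field R] [LinearOrder R]

open scoped Classical in
/-- The contribution of the point `x` to the Cauchy index of `q / p`: half the change of sign of
`q / p` at `x` if `q / p` has a pole there, and `0` otherwise. -/
def cauchyIndexAt (q p : R[X]) (x : R) : ℤ :=
  if (Polynomial.X - Polynomial.C x) ^ p.rootMultiplicity x ∣ q then 0 else jump (p * q) x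

/-- The Cauchy index of `q / p`: the number of its jumps from `-∞` to `+∞` minus the number of its
jumps from `+∞` to `-∞`. -/
def cauchyIndex (q p : R[X]) : ℤ :=
  ∑ x ∈ p.roots.toFinset, cauchyIndexAt q p x

@[simp]
lemma cauchyIndex_zero_left (p : R[X]) : cauchyIndex 0 p = 0 := by
  simp [cauchyIndex, cauchyIndexAt]

@[simp]
lemma cauchyIndex_zero_right (q : R[X]) : cauchyIndex q 0 = 0 := by
  simp [cauchyIndex]

lemma cauchyIndexAt_of_not_isRoot {p : R[X]} {x : R} (hx : ¬ p.IsRoot x) (q : R[X]) :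
    cauchyIndexAt q p x = 0 := by
  rw [cauchyIndexAt, Polynomial.rootMultiplicity_eq_zero hx, pow_zero, if_pos (one_dvd q)]

lemma cauchyIndex_eq_sum {p : R[X]} (hp : p ≠ 0) (q : R[X]) {s : Finset R}
    (hs : ∀ x, p.IsRoot x → x ∈ s) : cauchyIndex q p = ∑ x ∈ s, cauchyIndexAt q p x := by
  refine Finset.sum_subset (fun x hx => hs x ?_) fun x _ hx => cauchyIndexAt_of_not_isRoot ?_ q
  · exact Polynomial.isRoot_of_mem_roots (Multiset.mem_toFinset.1 hx)
  · rwa [Multiset.mem_toFinset, Polynomial.mem_roots hp] at hx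

lemma cauchyIndexAt_X_sub_C_pow_mul {x : R} {u v : R[X]} (hu : u.eval x ≠ 0)
    (hv : v.eval x ≠ 0) (m a : ℕ) :
    cauchyIndexAt ((Polynomial.X - Polynomial.C x) ^ a * v)
        ((Polynomial.X - Polynomial.C x) ^ m * u) x =
      if a < m ∧ Odd (m + a) then (SignType.sign ((u * v).eval x) : ℤ) else 0 := by
  have huv : (u * v).eval x ≠ 0 := by rw [Polynomial.eval_mul]; exact mul_ne_zero hu hv
  rw [cauchyIndexAt, rootMultiplicity_X_sub_C_pow_mul hu, mul_mul_mul_comm, ← pow_add,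
    jump_X_sub_C_pow_mul huv]
  simp only [X_sub_C_pow_dvd_X_sub_C_pow_mul_iff hv, ← not_lt, ite_not, ite_and]

lemma cauchyIndexAt_add_mul {p : R[X]} (hp : p ≠ 0) (q s : R[X]) (x : R) :
    cauchyIndexAt (q + p * s) p x = cauchyIndexAt q p x := by
  obtain ⟨m, u, hu, rfl⟩ := exists_eq_X_sub_C_pow_mul hp x
  set Y := Polynomial.X - Polynomial.C x with hY
  have hdvd : Y ^ (Y ^ m * u).rootMultiplicity x ∣ Y ^ m * u * s :=
    (Polynomial.pow_rootMultiplicity_dvd _ x).mul_right s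
  by_cases hq : Y ^ (Y ^ m * u).rootMultiplicity x ∣ q
  · rw [cauchyIndexAt, cauchyIndexAt, if_pos hq, if_pos (dvd_add hq hdvd)]
  have hq0 : q ≠ 0 := by rintro rfl; exact hq (dvd_zero _)
  obtain ⟨a, v, hv, rfl⟩ := exists_eq_X_sub_C_pow_mul hq0 x
  have ham : a < m := by
    rwa [rootMultiplicity_X_sub_C_pow_mul hu, X_sub_C_pow_dvd_X_sub_C_pow_mul_iff hv,
      not_le] at hq
  have hsplit : Y ^ a * v + Y ^ m * u * s = Y ^ a * (v + Y ^ (m - a) * (u * s)) := by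
    rw [← Nat.sub_add_cancel ham.le]
    simp only [Nat.add_sub_cancel]
    ring
  have heval : (v + Y ^ (m - a) * (u * s)).eval x = v.eval x := by
    simp [hY, Nat.sub_ne_zero_of_lt ham]
  rw [hsplit, cauchyIndexAt_X_sub_C_pow_mul hu (heval ▸ hv), cauchyIndexAt_X_sub_C_pow_mul hu hv,
    Polynomial.eval_mul, heval, Polynomial.eval_mul]

lemma cauchyIndex_add_mul (q p s : R[X]) :
    cauchyIndex (q + p * s) p = cauchyIndex q p := by
  rcases eq_or_ne p 0 with rfl | hp
  · simp
  · exact Finset.sum_congr rfl fun x _ => cauchyIndexAt_add_mul hp q s x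

variable [IsStrictOrderedRing R]

lemma cauchyIndex_C_mul {c : R} (hc : 0 < c) (q p : R[X]) :
    cauchyIndex (Polynomial.C c * q) p = cauchyIndex q p := by
  refine Finset.sum_congr rfl fun x _ => ?_
  have hunit : IsUnit (Polynomial.C c) := Polynomial.isUnit_C.2 hc.ne'.isUnit
  rw [cauchyIndexAt, cauchyIndexAt, hunit.dvd_mul_left, mul_left_comm, jump_C_mul, sign_pos hc,
    SignType.coe_one, one_mul]

lemma cauchyIndexAt_add_swap {q p : R[X]} (hq : q ≠ 0) (hp : p ≠ 0) (x : R) :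
    cauchyIndexAt q p x + cauchyIndexAt p q x = jump (p * q) x := by
  obtain ⟨m, u, hu, rfl⟩ := exists_eq_X_sub_C_pow_mul hp x
  obtain ⟨a, v, hv, rfl⟩ := exists_eq_X_sub_C_pow_mul hq x
  have huv : (u * v).eval x ≠ 0 := by rw [Polynomial.eval_mul]; exact mul_ne_zero hu hv
  rw [cauchyIndexAt_X_sub_C_pow_mul hu hv, cauchyIndexAt_X_sub_C_pow_mul hv hu, mul_mul_mul_comm,
    ← pow_add, jump_X_sub_C_pow_mul huv, mul_comm v u, add_comm a m]
  rcases lt_trichotomy a m with h | rfl | h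
  · simp [h, h.not_gt]
  · simp [Nat.not_odd_iff_even]
  · simp [h, h.not_gt]

theorem cauchyIndex_add_swap [PolynomialIVT R] (q p : R[X]) :
    cauchyIndex q p + cauchyIndex p q =
      if Odd (p.natDegree + q.natDegree) then
        (SignType.sign (p.leadingCoeff * q.leadingCoeff) : ℤ) else 0 := by
  rcases eq_or_ne p 0 with rfl | hp
  · simp
  rcases eq_or_ne q 0 with rfl | hq
  · simp
  have hpq : p * q ≠ 0 := mul_ne_zero hp hq
  have hmem : ∀ x, (p * q).IsRoot x → x ∈ (p * q).roots.toFinset := fun x hx =>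
    Multiset.mem_toFinset.2 ((Polynomial.mem_roots hpq).2 hx)
  rw [cauchyIndex_eq_sum hp q fun x hx => hmem x (Polynomial.root_mul_right_of_isRoot _ hx),
    cauchyIndex_eq_sum hq p fun x hx => hmem x (Polynomial.root_mul_left_of_isRoot _ hx),
    ← Finset.sum_add_distrib, ← Polynomial.natDegree_mul hp hq, ← Polynomial.leadingCoeff_mul,
    ← sum_jump hpq hmem]
  exact Finset.sum_congr rfl fun x _ => cauchyIndexAt_add_swap hq hp x

lemma cauchyIndexAt_derivative_mul {p : R[X]} (hp : p ≠ 0) {x : R} (hx : p.IsRoot x)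
    (q : R[X]) :
    cauchyIndexAt (Polynomial.derivative p * q) p x = SignType.sign (q.eval x) := by
  obtain ⟨m, u, hu, rfl⟩ := exists_eq_X_sub_C_pow_mul hp x
  obtain ⟨m, rfl⟩ : ∃ k, m = k + 1 := Nat.exists_eq_succ_of_ne_zero <| by
    rintro rfl
    rw [pow_zero, one_mul] at hx
    exact hu hx
  set Y := Polynomial.X - Polynomial.C x with hY
  set v := Polynomial.C ((m : R) + 1) * u + Y * Polynomial.derivative u with hv
  have hderiv : Polynomial.derivative (Y ^ (m + 1) * u) = Y ^ m * v := by
    rw [Polynomial.derivative_mul, Polynomial.derivative_X_sub_C_pow, hv]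
    push_cast
    ring
  have hvx : v.eval x = (m + 1) * u.eval x := by simp [hv, hY]
  rw [hderiv, mul_assoc]
  by_cases hqx : q.eval x = 0
  · obtain ⟨r, rfl⟩ := Polynomial.dvd_iff_isRoot.2 hqx
    rw [hqx, cauchyIndexAt, if_pos, sign_zero, SignType.coe_zero]
    rw [rootMultiplicity_X_sub_C_pow_mul hu]
    exact ⟨v * r, by ring⟩
  · have hm : (0 : R) < m + 1 := by positivity
    have hvq : (v * q).eval x ≠ 0 := by
      rw [Polynomial.eval_mul, hvx]
      exact mul_ne_zero (mul_ne_zero hm.ne' hu) hqx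
    have hpos : 0 < (m + 1) * (u.eval x * u.eval x) := mul_pos hm (mul_self_pos.2 hu)
    have hprod : (u * (v * q)).eval x = (m + 1) * (u.eval x * u.eval x) * q.eval x := by
      rw [Polynomial.eval_mul, Polynomial.eval_mul, hvx]
      ring
    rw [cauchyIndexAt_X_sub_C_pow_mul hu hvq, if_pos ⟨m.lt_succ_self, m, by ring⟩, hprod, sign_mul,
      sign_pos hpos, one_mul]

theorem cauchyIndex_derivative_mul (q p : R[X]) :
    cauchyIndex (Polynomial.derivative p * q) p =
      ∑ x ∈ p.roots.toFinset, (SignType.sign (q.eval x) : ℤ) := by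
  refine Finset.sum_congr rfl fun x hx => ?_
  obtain ⟨hp, hx⟩ := Polynomial.mem_roots'.1 (Multiset.mem_toFinset.1 hx)
  exact cauchyIndexAt_derivative_mul hp hx q

end CauchyIndex

section Transfer

open scoped Polynomial

variable {A R₁ R₂ : Type*} [CommRing A] [Field R₁] [LinearOrder R₁] [Field R₂] [LinearOrder R₂]

/-- The neighbourhood filter of the ordering defined by `φ` in the real spectrum of `A`, restricted
to the homomorphisms to `R₂`: it is generated by the conditions that finitely many elements of `A`
have the same sign under `ψ` as under `φ`. -/
def signFilter (φ : A →+* R₁) (R₂ : Type*) [Field R₂] [LinearOrder R₂] : Filter (A →+* R₂) :=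
  ⨅ a, Filter.principal {ψ | SignType.sign (ψ a) = SignType.sign (φ a)}

lemma eventually_sign_eq (φ : A →+* R₁) (a : A) :
    ∀ᶠ ψ in signFilter φ R₂, SignType.sign (ψ a) = SignType.sign (φ a) :=
  Filter.mem_iInf_of_mem a (Filter.mem_principal_self _)

lemma eventually_apply_ne_zero {φ : A →+* R₁} {a : A} (ha : φ a ≠ 0) :
    ∀ᶠ ψ in signFilter φ R₂, ψ a ≠ 0 :=
  (eventually_sign_eq φ a).mono fun ψ h => by rwa [← sign_ne_zero, h, sign_ne_zero]

lemma eventually_forall_sign_coeff_map_eq (φ : A →+* R₁) (p : A[X]) :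
    ∀ᶠ ψ in signFilter φ R₂, ∀ n,
      SignType.sign ((p.map ψ).coeff n) = SignType.sign ((p.map φ).coeff n) := by
  have h : ∀ᶠ ψ in signFilter φ R₂, ∀ n ∈ p.support,
      SignType.sign (ψ (p.coeff n)) = SignType.sign (φ (p.coeff n)) :=
    (Filter.eventually_all_finset _).2 fun n _ => eventually_sign_eq φ (p.coeff n)
  refine h.mono fun ψ hψ n => ?_
  rw [Polynomial.coeff_map, Polynomial.coeff_map]
  by_cases hn : n ∈ p.support
  · exact hψ n hn
  · simp [Polynomial.notMem_support_iff.1 hn]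

section SignCoeff

variable {f : R₁[X]} {g : R₂[X]}
  (h : ∀ n, SignType.sign (g.coeff n) = SignType.sign (f.coeff n))

include h

lemma support_eq_of_sign_coeff_eq : g.support = f.support := by
  ext n
  rw [Polynomial.mem_support_iff, Polynomial.mem_support_iff, ← sign_ne_zero, h, sign_ne_zero]

lemma natDegree_eq_of_sign_coeff_eq : g.natDegree = f.natDegree := by
  rw [Polynomial.natDegree, Polynomial.natDegree, Polynomial.degree, Polynomial.degree,
    support_eq_of_sign_coeff_eq h]

lemma sign_leadingCoeff_eq_of_sign_coeff_eq :
    SignType.sign g.leadingCoeff = SignType.sign f.leadingCoeff := by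
  rw [Polynomial.leadingCoeff, Polynomial.leadingCoeff, natDegree_eq_of_sign_coeff_eq h, h]

lemma sign_trailingCoeff_eq_of_sign_coeff_eq :
    SignType.sign g.trailingCoeff = SignType.sign f.trailingCoeff := by
  have hdeg : g.natTrailingDegree = f.natTrailingDegree := by
    rw [Polynomial.natTrailingDegree, Polynomial.natTrailingDegree, Polynomial.trailingDegree,
      Polynomial.trailingDegree, support_eq_of_sign_coeff_eq h]
  rw [Polynomial.trailingCoeff, Polynomial.trailingCoeff, hdeg, h]

end SignCoeff

lemma eventually_map_eq_zero {φ : A →+* R₁} {p : A[X]} (hp : p.map φ = 0) :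
    ∀ᶠ ψ in signFilter φ R₂, p.map ψ = 0 :=
  (eventually_forall_sign_coeff_map_eq φ p).mono fun ψ hψ => by
    rw [← Polynomial.support_eq_empty, support_eq_of_sign_coeff_eq hψ, hp, Polynomial.support_zero]

variable [IsStrictOrderedRing R₁] [IsStrictOrderedRing R₂]

lemma cauchyIndex_map_eq_of_mul_self_mul_eq {q r p s : A[X]} {c : A}
    (h : Polynomial.C (c * c) * q = r + p * s) {φ : A →+* R₁} (hc : φ c ≠ 0) :
    cauchyIndex (q.map φ) (p.map φ) = cauchyIndex (r.map φ) (p.map φ) := by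
  rw [← cauchyIndex_C_mul (mul_self_pos.2 hc) (q.map φ), ← map_mul φ, ← Polynomial.map_C,
    ← Polynomial.map_mul, h, Polynomial.map_add, Polynomial.map_mul, cauchyIndex_add_mul]

lemma degree_pseudoRemainder_lt {f g : R₁[X]} (hf : f ≠ 0) (hg : g ≠ 0)
    (hle : g.natDegree ≤ f.natDegree) :
    (Polynomial.C (g.leadingCoeff * g.leadingCoeff) * f - g * (Polynomial.C (g.leadingCoeff *
      f.leadingCoeff) * Polynomial.X ^ (f.natDegree - g.natDegree))).degree < f.degree := by
  have hf0 : f.leadingCoeff ≠ 0 := Polynomial.leadingCoeff_ne_zero.2 hf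
  have hg0 : g.leadingCoeff ≠ 0 := Polynomial.leadingCoeff_ne_zero.2 hg
  have hdeg : (Polynomial.C (g.leadingCoeff * g.leadingCoeff) * f).degree = f.degree :=
    Polynomial.degree_C_mul (mul_ne_zero hg0 hg0)
  rw [← hdeg]
  refine Polynomial.degree_sub_lt_left ?_ (mul_ne_zero (by simpa using hg) hf) ?_
  · rw [hdeg, Polynomial.degree_mul, Polynomial.degree_C_mul_X_pow _ (mul_ne_zero hg0 hf0),
      Polynomial.degree_eq_natDegree hf, Polynomial.degree_eq_natDegree hg, ← Nat.cast_add,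
      Nat.add_sub_cancel' hle]
  · rw [Polynomial.leadingCoeff_mul, Polynomial.leadingCoeff_mul, Polynomial.leadingCoeff_C,
      Polynomial.leadingCoeff_C_mul_X_pow, mul_assoc]

variable [PolynomialIVT R₁] [PolynomialIVT R₂]

lemma eventually_cauchyIndex_map_swap {φ : A →+* R₁} {q p : A[X]}
    (h : ∀ᶠ ψ in signFilter φ R₂,
      cauchyIndex (q.map ψ) (p.map ψ) = cauchyIndex (q.map φ) (p.map φ)) :
    ∀ᶠ ψ in signFilter φ R₂,
      cauchyIndex (p.map ψ) (q.map ψ) = cauchyIndex (p.map φ) (q.map φ) := by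
  filter_upwards [h, eventually_forall_sign_coeff_map_eq φ p,
    eventually_forall_sign_coeff_map_eq φ q] with ψ hψ hp hq
  have hφψ : cauchyIndex (q.map ψ) (p.map ψ) + cauchyIndex (p.map ψ) (q.map ψ) =
      cauchyIndex (q.map φ) (p.map φ) + cauchyIndex (p.map φ) (q.map φ) := by
    simp only [cauchyIndex_add_swap, sign_mul, natDegree_eq_of_sign_coeff_eq hp,
      natDegree_eq_of_sign_coeff_eq hq, sign_leadingCoeff_eq_of_sign_coeff_eq hp,
      sign_leadingCoeff_eq_of_sign_coeff_eq hq]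
  linarith

/-- The Euclidean algorithm, run without divisions in `A`. -/
theorem eventually_cauchyIndex_map_eq (φ : A →+* R₁) (q p : A[X]) :
    ∀ᶠ ψ in signFilter φ R₂,
      cauchyIndex (q.map ψ) (p.map ψ) = cauchyIndex (q.map φ) (p.map φ) := by
  induction hN : (q.map φ).natDegree + (p.map φ).natDegree using Nat.strong_induction_on
    generalizing q p with | _ N ih
  subst hN
  wlog hle : (p.map φ).natDegree ≤ (q.map φ).natDegree generalizing q p
  · exact eventually_cauchyIndex_map_swap
      (this p q (fun M hM => ih M (add_comm (q.map φ).natDegree _ ▸ hM)) (not_le.1 hle).le)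
  by_cases hq : q.map φ = 0
  · filter_upwards [eventually_map_eq_zero hq] with ψ hψ
    rw [hψ, hq, cauchyIndex_zero_left, cauchyIndex_zero_left]
  by_cases hp : p.map φ = 0
  · filter_upwards [eventually_map_eq_zero hp] with ψ hψ
    rw [hψ, hp, cauchyIndex_zero_right, cauchyIndex_zero_right]
  set c := p.coeff (p.map φ).natDegree
  set d := q.coeff (q.map φ).natDegree
  have hφc : φ c = (p.map φ).leadingCoeff := by rw [Polynomial.leadingCoeff, Polynomial.coeff_map]
  have hφd : φ d = (q.map φ).leadingCoeff := by rw [Polynomial.leadingCoeff, Polynomial.coeff_map]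
  have hc0 : φ c ≠ 0 := hφc ▸ Polynomial.leadingCoeff_ne_zero.2 hp
  set s := Polynomial.C (c * d) * Polynomial.X ^ ((q.map φ).natDegree - (p.map φ).natDegree)
  set r := Polynomial.C (c * c) * q - p * s
  have hdvd : Polynomial.C (c * c) * q = r + p * s := (sub_add_cancel _ _).symm
  have hr : ∀ᶠ ψ in signFilter φ R₂,
      cauchyIndex (r.map ψ) (p.map ψ) = cauchyIndex (r.map φ) (p.map φ) := by
    by_cases hr0 : r.map φ = 0
    · filter_upwards [eventually_map_eq_zero hr0] with ψ hψ
      rw [hψ, hr0, cauchyIndex_zero_left, cauchyIndex_zero_left]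
    · refine ih _ (Nat.add_lt_add_right (Polynomial.natDegree_lt_natDegree hr0 ?_) _) r p rfl
      simpa [r, s, hφc, hφd] using degree_pseudoRemainder_lt hq hp hle
  filter_upwards [hr, eventually_apply_ne_zero hc0] with ψ hψ hψc
  rw [cauchyIndex_map_eq_of_mul_self_mul_eq hdvd hψc, hψ,
    cauchyIndex_map_eq_of_mul_self_mul_eq hdvd hc0]

end Transfer

section TransferRoots

open scoped Polynomial

variable {A R₁ R₂ : Type*} [CommRing A]
  [Field R₁] [LinearOrder R₁] [IsStrictOrderedRing R₁] [PolynomialIVT R₁]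
  [Field R₂] [LinearOrder R₂] [IsStrictOrderedRing R₂] [PolynomialIVT R₂]

lemma eventually_sum_sign_eval_roots_map_eq (φ : A →+* R₁) (p q : A[X]) :
    ∀ᶠ ψ in signFilter φ R₂,
      ∑ x ∈ (p.map ψ).roots.toFinset, (SignType.sign ((q.map ψ).eval x) : ℤ) =
        ∑ x ∈ (p.map φ).roots.toFinset, (SignType.sign ((q.map φ).eval x) : ℤ) := by
  filter_upwards [eventually_cauchyIndex_map_eq φ (Polynomial.derivative p * q) p] with ψ hψ
  simpa only [Polynomial.map_mul, ← Polynomial.derivative_map, cauchyIndex_derivative_mul] using hψ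

lemma two_mul_ite_eq_sign (s t : SignType) :
    2 * (if s = t then 1 else 0 : ℤ) =
      (3 * t * t - 2) * (s * s) + t * s + 2 * (1 - t * t) := by
  revert s t; decide

lemma two_mul_sum_filter_sign_eq {K : Type*} [Field K] [LinearOrder K] [IsStrictOrderedRing K]
    (s : Finset K) (q r : K[X]) (t : SignType) :
    2 * ∑ x ∈ s with SignType.sign (r.eval x) = t, (SignType.sign (q.eval x) : ℤ) =
      (3 * t * t - 2) * ∑ x ∈ s, (SignType.sign ((r * r * q).eval x) : ℤ) +
        t * ∑ x ∈ s, (SignType.sign ((r * q).eval x) : ℤ) +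
        2 * (1 - t * t) * ∑ x ∈ s, (SignType.sign (q.eval x) : ℤ) := by
  simp only [Finset.sum_filter, Finset.mul_sum, ← Finset.sum_add_distrib, Polynomial.eval_mul,
    sign_mul, SignType.coe_mul]
  refine Finset.sum_congr rfl fun x _ => ?_
  rw [← mul_boole, mul_left_comm, two_mul_ite_eq_sign]
  ring

/-- Tarski's reduction of the sign conditions `Q` to sums of signs over the roots of `p`. -/
lemma eventually_sum_filter_sign_eval_roots_map_eq (φ : A →+* R₁) (p : A[X]) (Q : Finset A[X])
    (σ : A[X] → SignType) (q : A[X]) :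
    ∀ᶠ ψ in signFilter φ R₂,
      ∑ x ∈ (p.map ψ).roots.toFinset with ∀ r ∈ Q, SignType.sign ((r.map ψ).eval x) = σ r,
          (SignType.sign ((q.map ψ).eval x) : ℤ) =
        ∑ x ∈ (p.map φ).roots.toFinset with ∀ r ∈ Q, SignType.sign ((r.map φ).eval x) = σ r,
          (SignType.sign ((q.map φ).eval x) : ℤ) := by
  classical
  induction Q using Finset.induction_on generalizing q with
  | empty => simpa using eventually_sum_sign_eval_roots_map_eq φ p q
  | insert r Q _ ih =>
    filter_upwards [ih q, ih (r * q), ih (r * r * q)] with ψ h₀ h₁ h₂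
    simp only [Polynomial.map_mul] at h₁ h₂
    refine mul_left_cancel₀ (two_ne_zero (α := ℤ)) ?_
    simp only [Finset.forall_mem_insert, and_comm (b := ∀ r ∈ Q, _), ← Finset.filter_filter,
      two_mul_sum_filter_sign_eq, h₀, h₁, h₂]

theorem eventually_exists_isRoot {φ : A →+* R₁} {p : A[X]} (hp : p.map φ ≠ 0) {x : R₁}
    (hx : (p.map φ).IsRoot x) (Q : Finset A[X]) :
    ∀ᶠ ψ in signFilter φ R₂, ∃ y, (p.map ψ).IsRoot y ∧
      ∀ r ∈ Q, SignType.sign ((r.map ψ).eval y) = SignType.sign ((r.map φ).eval x) := by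
  filter_upwards [eventually_sum_filter_sign_eval_roots_map_eq φ p Q
    (fun r => SignType.sign ((r.map φ).eval x)) 1] with ψ hψ
  simp only [Polynomial.map_one, Polynomial.eval_one, sign_one, SignType.coe_one, Finset.sum_const,
    nsmul_one, Nat.cast_inj] at hψ
  have hpos : 0 < Finset.card {y ∈ (p.map φ).roots.toFinset |
      ∀ r ∈ Q, SignType.sign ((r.map φ).eval y) = SignType.sign ((r.map φ).eval x)} :=
    Finset.card_pos.2 ⟨x, by simp [hp, hx.eq_zero]⟩
  obtain ⟨y, hy⟩ := Finset.card_pos.1 (hψ ▸ hpos)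
  simp only [Finset.mem_filter, Multiset.mem_toFinset] at hy
  exact ⟨y, Polynomial.isRoot_of_mem_roots hy.1, hy.2⟩

end TransferRoots

section TransferIntervals

open scoped Polynomial

section Sign

variable {K : Type*} [Field K] [LinearOrder K] [IsStrictOrderedRing K] [PolynomialIVT K]

lemma sign_eval_eq_sign_trailingCoeff_taylor {f : K[X]} {x z : K} (hxz : x < z)
    (hf : ∀ y ∈ Set.Ioc x z, ¬ f.IsRoot y) :
    SignType.sign (f.eval z) = SignType.sign (Polynomial.taylor x f).trailingCoeff := by
  have hf0 : f ≠ 0 := by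
    rintro rfl
    exact hf z ⟨hxz, le_rfl⟩ Polynomial.eval_zero
  obtain ⟨m, u, hu, rfl⟩ := exists_eq_X_sub_C_pow_mul hf0 x
  have htrail : (Polynomial.taylor x u).trailingCoeff = u.eval x := by
    rw [Polynomial.trailingCoeff_eq_coeff_zero (by rwa [Polynomial.taylor_coeff_zero]),
      Polynomial.taylor_coeff_zero]
  have hsign : SignType.sign (u.eval x) = SignType.sign (u.eval z) := by
    refine sign_eval_eq_of_forall_not_isRoot hxz.le fun y hy hroot => ?_
    rcases hy.1.eq_or_lt with rfl | hlt
    · exact hu hroot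
    · exact hf y ⟨hlt, hy.2⟩ (Polynomial.root_mul_left_of_isRoot _ hroot)
  have htaylor : Polynomial.taylor x ((Polynomial.X - Polynomial.C x) ^ m * u) =
      Polynomial.X ^ m * Polynomial.taylor x u := by simp
  have hX : (Polynomial.X ^ m : K[X]).trailingCoeff = 1 := by simp [Polynomial.trailingCoeff]
  rw [htaylor, Polynomial.trailingCoeff_mul, hX, one_mul, htrail, hsign, Polynomial.eval_mul,
    sign_mul, Polynomial.eval_pow, Polynomial.eval_sub, Polynomial.eval_X, Polynomial.eval_C,
    sign_pos (pow_pos (sub_pos.2 hxz) m), one_mul]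

lemma sign_eval_eq_of_forall_le_not_isRoot {f : K[X]} {y : K} (hf : ∀ x ≤ y, ¬ f.IsRoot x) :
    SignType.sign (f.eval y) = SignType.sign f.leadingCoeff * (-1) ^ f.natDegree := by
  obtain ⟨M, hM⟩ := exists_forall_le_sign_eval_eq f
  rw [← hM (min M y) (min_le_left M y),
    sign_eval_eq_of_forall_not_isRoot (min_le_right M y) fun x hx => hf x hx.2]

omit [PolynomialIVT K] in
lemma exists_gt_forall_mem_Ioo_notMem (s : Finset K) (x : K) :
    ∃ b > x, ∀ z ∈ Set.Ioo x b, z ∉ s := by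
  set t := insert (x + 1) {z ∈ s | x < z}
  have ht : t.Nonempty := Finset.insert_nonempty _ _
  refine ⟨t.min' ht, ?_, fun z hz hzs => hz.2.not_ge (t.min'_le z (by simp [t, hzs, hz.1]))⟩
  refine (Finset.lt_min'_iff t ht).2 fun z hz => ?_
  rcases Finset.mem_insert.1 hz with rfl | hz
  · exact lt_add_one x
  · exact (Finset.mem_filter.1 hz).2

end Sign

variable {A R₁ R₂ : Type*} [CommRing A]
  [Field R₁] [LinearOrder R₁] [IsStrictOrderedRing R₁] [PolynomialIVT R₁]
  [Field R₂] [LinearOrder R₂] [IsStrictOrderedRing R₂] [PolynomialIVT R₂]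

lemma hasseDeriv_map {B : Type*} [CommRing B] (φ : A →+* B) (n : ℕ) (f : A[X]) :
    (Polynomial.hasseDeriv n f).map φ = Polynomial.hasseDeriv n (f.map φ) := by
  ext i
  simp [Polynomial.hasseDeriv_coeff]

lemma eventually_exists_sign_taylor_coeff_eq {φ : A →+* R₁} {p : A[X]} (hp : p.map φ ≠ 0) {x : R₁}
    (hx : (p.map φ).IsRoot x) (Q : Finset A[X]) :
    ∀ᶠ ψ in signFilter φ R₂, ∃ y, ∀ q ∈ Q, ∀ n,
      SignType.sign ((Polynomial.taylor y (q.map ψ)).coeff n) =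
        SignType.sign ((Polynomial.taylor x (q.map φ)).coeff n) := by
  classical
  filter_upwards [eventually_exists_isRoot hp hx <| Q.biUnion fun q =>
    (Finset.range (q.natDegree + 1)).image fun n => Polynomial.hasseDeriv n q] with ψ ⟨y, _, hy⟩
  refine ⟨y, fun q hq n => ?_⟩
  rw [Polynomial.taylor_coeff, Polynomial.taylor_coeff, ← hasseDeriv_map, ← hasseDeriv_map]
  rcases le_or_gt n q.natDegree with hn | hn
  · exact hy _ (Finset.mem_biUnion.2 ⟨q, hq, Finset.mem_image.2
      ⟨n, Finset.mem_range_succ_iff.2 hn, rfl⟩⟩)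
  · simp [Polynomial.hasseDeriv_eq_zero_of_lt_natDegree q n hn]

lemma eventually_exists_Ioo_of_isRoot {φ : A →+* R₁} {p : A[X]} (hp : p.map φ ≠ 0) {x y : R₁}
    (hx : (p.map φ).IsRoot x) (hxy : x < y) {Q : Finset A[X]}
    (hQ : ∀ q ∈ Q, ∀ z ∈ Set.Ioc x y, ¬ (q.map φ).IsRoot z) :
    ∀ᶠ ψ in signFilter φ R₂, ∃ a b, a < b ∧ ∀ z ∈ Set.Ioo a b, ∀ q ∈ Q,
      SignType.sign ((q.map ψ).eval z) = SignType.sign ((q.map φ).eval y) := by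
  classical
  filter_upwards [eventually_exists_sign_taylor_coeff_eq hp hx Q] with ψ ⟨a, ha⟩
  obtain ⟨b, hab, hb⟩ :=
    exists_gt_forall_mem_Ioo_notMem (Q.biUnion fun q => (q.map ψ).roots.toFinset) a
  refine ⟨a, b, hab, fun z hz q hq => ?_⟩
  have htrail := sign_trailingCoeff_eq_of_sign_coeff_eq (ha q hq)
  rw [← sign_eval_eq_sign_trailingCoeff_taylor hxy (hQ q hq)] at htrail
  rw [← htrail]
  refine sign_eval_eq_sign_trailingCoeff_taylor hz.1 fun w hw hroot => ?_
  have hq0 : q.map ψ ≠ 0 := fun h0 => hQ q hq y ⟨hxy, le_rfl⟩ <| by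
    rwa [h0, map_zero, Polynomial.trailingCoeff_zero, sign_zero, eq_comm,
      sign_eq_zero_iff] at htrail
  exact hb w ⟨hw.1, hw.2.trans_lt hz.2⟩ (Finset.mem_biUnion.2
    ⟨q, hq, Multiset.mem_toFinset.2 ((Polynomial.mem_roots hq0).2 hroot)⟩)

omit [PolynomialIVT R₂] in
lemma eventually_exists_Ioo_of_forall_le {φ : A →+* R₁} {y : R₁} {Q : Finset A[X]}
    (hQ : ∀ q ∈ Q, ∀ x ≤ y, ¬ (q.map φ).IsRoot x) :
    ∀ᶠ ψ in signFilter φ R₂, ∃ a b, a < b ∧ ∀ z ∈ Set.Ioo a b, ∀ q ∈ Q,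
      SignType.sign ((q.map ψ).eval z) = SignType.sign ((q.map φ).eval y) := by
  filter_upwards [(Filter.eventually_all_finset Q).2 fun q _ =>
    eventually_forall_sign_coeff_map_eq φ q] with ψ hψ
  choose M hM using fun q : A[X] => exists_forall_le_sign_eval_eq (q.map ψ)
  obtain ⟨b, hb⟩ := (Q.image M).bddBelow
  refine ⟨b - 1, b, sub_one_lt b, fun z hz q hq => ?_⟩
  rw [hM q z (hz.2.le.trans (hb (Finset.mem_image_of_mem M hq))),
    sign_eval_eq_of_forall_le_not_isRoot (hQ q hq), natDegree_eq_of_sign_coeff_eq (hψ q hq),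
    sign_leadingCoeff_eq_of_sign_coeff_eq (hψ q hq)]

theorem eventually_exists_Ioo {φ : A →+* R₁} {y : R₁} {Q : Finset A[X]}
    (hQ : ∀ q ∈ Q, ¬ (q.map φ).IsRoot y) :
    ∀ᶠ ψ in signFilter φ R₂, ∃ a b, a < b ∧ ∀ z ∈ Set.Ioo a b, ∀ q ∈ Q,
      SignType.sign ((q.map ψ).eval z) = SignType.sign ((q.map φ).eval y) := by
  classical
  set s := {x ∈ Q.biUnion fun q => (q.map φ).roots.toFinset | x < y}
  have hmem : ∀ q ∈ Q, ∀ x ≤ y, (q.map φ).IsRoot x → x ∈ s := by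
    intro q hq x hxy hx
    have hq0 : q.map φ ≠ 0 := fun h => hQ q hq (by rw [h]; exact Polynomial.eval_zero)
    refine Finset.mem_filter.2 ⟨Finset.mem_biUnion.2 ⟨q, hq, ?_⟩, hxy.lt_of_ne ?_⟩
    · exact Multiset.mem_toFinset.2 ((Polynomial.mem_roots hq0).2 hx)
    · rintro rfl
      exact hQ q hq hx
  rcases s.eq_empty_or_nonempty with hs | hs
  · exact eventually_exists_Ioo_of_forall_le fun q hq x hxy hx =>
      Finset.notMem_empty x (hs ▸ hmem q hq x hxy hx)
  obtain ⟨hmax, hlt⟩ := Finset.mem_filter.1 (s.max'_mem hs)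
  obtain ⟨p, -, hp⟩ := Finset.mem_biUnion.1 hmax
  obtain ⟨hp0, hroot⟩ := Polynomial.mem_roots'.1 (Multiset.mem_toFinset.1 hp)
  exact eventually_exists_Ioo_of_isRoot hp0 hroot hlt fun q hq z hz hz' =>
    hz.1.not_ge (s.le_max' z (hmem q hq z hz.2 hz'))

end TransferIntervals

section ArtinLang

open scoped Polynomial

lemma frequently_signFilter_of_forall_finset {A R₁ R₂ : Type*} [CommRing A] [Field R₁]
    [LinearOrder R₁] [Field R₂] [LinearOrder R₂] {φ : A →+* R₁} {P : (A →+* R₂) → Prop}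
    (h : ∀ s : Finset A, ∃ ψ, (∀ a ∈ s, SignType.sign (ψ a) = SignType.sign (φ a)) ∧ P ψ) :
    ∃ᶠ ψ in signFilter φ R₂, P ψ := by
  refine (Filter.hasBasis_iInf_principal_finite _).frequently_iff.2 fun s hs => ?_
  obtain ⟨ψ, hψ, hP⟩ := h hs.toFinset
  exact ⟨ψ, Set.mem_iInter₂.2 fun a ha => hψ a (hs.mem_toFinset.2 ha), hP⟩

/-- The Artin–Lang property of `A` for homomorphisms to `R`: any homomorphism `A → R` can be
replaced by a real one without changing the signs of finitely many elements or killing any of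
countably many elements. -/
def ArtinLang (R A : Type*) [Field R] [LinearOrder R] [CommRing A] : Prop :=
  ∀ (φ : A →+* R) (s : Finset A) (e : ℕ → A), (∀ j, φ (e j) ≠ 0) →
    ∃ ψ : A →+* ℝ, (∀ a ∈ s, SignType.sign (ψ a) = SignType.sign (φ a)) ∧ ∀ j, ψ (e j) ≠ 0

variable {R A : Type*} [Field R] [LinearOrder R] [CommRing A]

lemma ArtinLang.frequently (h : ArtinLang R A) {φ : A →+* R} {e : ℕ → A} (he : ∀ j, φ (e j) ≠ 0) :
    ∃ᶠ ψ in signFilter φ ℝ, ∀ j, ψ (e j) ≠ 0 :=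
  frequently_signFilter_of_forall_finset fun s => h φ s e he

lemma ArtinLang.of_ringEquiv {B : Type*} [CommRing B] (h : ArtinLang R A) (f : B ≃+* A) :
    ArtinLang R B := by
  classical
  intro φ s e he
  obtain ⟨ψ, hψ, hne⟩ := h (φ.comp f.symm) (s.image f) (f ∘ e) (by simpa using he)
  exact ⟨ψ.comp f, by simpa using hψ, hne⟩

lemma eval_map_comp_C {K : Type*} [CommRing K] (φ : A[X] →+* K) (f : A[X]) :
    (f.map (φ.comp Polynomial.C)).eval (φ Polynomial.X) = φ f := by
  rw [Polynomial.eval_map, ← Polynomial.coe_eval₂RingHom]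
  exact DFunLike.congr_fun (Polynomial.ringHom_ext (by simp) (by simp)) f

lemma aeval_map_rangeRestrict {K : Type*} [CommRing K] (φ : A[X] →+* K) (f : A[X]) :
    Polynomial.aeval (φ Polynomial.X) (f.map (φ.comp Polynomial.C).rangeRestrict) = φ f := by
  refine Eq.trans ?_ (eval_map_comp_C φ f)
  rw [Polynomial.aeval_def, Polynomial.eval₂_map, Polynomial.eval_map]
  rfl

lemma exists_mul_eq_map_C_of_isAlgebraic {K : Type*} [Field K] {φ : A[X] →+* K}
    (hφ : IsAlgebraic (φ.comp Polynomial.C).range (φ Polynomial.X)) {e : A[X]} (he : φ e ≠ 0) :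
    ∃ (c : A) (u : A[X]), φ (Polynomial.C c) ≠ 0 ∧ φ (e * u) = φ (Polynomial.C c) := by
  have hmem : φ e ∈ Algebra.adjoin (φ.comp Polynomial.C).range {φ Polynomial.X} :=
    aeval_map_rangeRestrict φ e ▸ Polynomial.aeval_mem_adjoin_singleton _ _
  obtain ⟨t, ht, ⟨_, c, rfl⟩, hc, hte⟩ :=
    (Algebra.isAlgebraic_adjoin_singleton_iff.2 hφ _ hmem).exists_nonzero_eq_adjoin_mul
      (mem_nonZeroDivisors_of_ne_zero he)
  have ht := Algebra.adjoin_le (Set.singleton_subset_iff.2 hmem) ht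
  rw [Algebra.adjoin_singleton_eq_range_aeval] at ht
  obtain ⟨f, rfl⟩ := ht
  obtain ⟨u, rfl⟩ := Polynomial.map_surjective _ (RingHom.rangeRestrict_surjective _) f
  refine ⟨c, u, fun h => hc (Subtype.ext h), ?_⟩
  rw [map_mul, ← aeval_map_rangeRestrict φ u]
  exact hte

variable [IsStrictOrderedRing R]

lemma artinLang_real : ArtinLang R ℝ := by
  intro φ s e he
  have hφ : StrictMono φ :=
    (ringHom_monotone (fun _ => Real.isSquare_iff.2) φ).strictMono_of_injective φ.injective
  exact ⟨RingHom.id ℝ, fun a _ => (hφ.sign_comp a).symm, fun j h => he j (by simpa using h)⟩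

variable [PolynomialIVT R]

lemma isAlgebraic_range_iff {K : Type*} [CommRing K] {φ : A[X] →+* K} :
    IsAlgebraic (φ.comp Polynomial.C).range (φ Polynomial.X) ↔
      ∃ p : A[X], p.map (φ.comp Polynomial.C) ≠ 0 ∧
        (p.map (φ.comp Polynomial.C)).IsRoot (φ Polynomial.X) := by
  have hne : ∀ p : A[X], p.map (φ.comp Polynomial.C).rangeRestrict = 0 ↔
      p.map (φ.comp Polynomial.C) = 0 := fun p => by
    rw [← Polynomial.map_eq_zero_iff (f := (φ.comp Polynomial.C).range.subtype)
      Subtype.val_injective, Polynomial.map_map]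
    rfl
  simp only [Polynomial.IsRoot, eval_map_comp_C, IsAlgebraic, ne_eq, ← hne]
  refine (Polynomial.map_surjective _ (RingHom.rangeRestrict_surjective _)).exists.trans ?_
  simp only [aeval_map_rangeRestrict]

lemma ArtinLang.exists_of_isAlgebraic [IsNoetherianRing A] (h : ArtinLang R A) {φ : A[X] →+* R}
    (hφ : IsAlgebraic (φ.comp Polynomial.C).range (φ Polynomial.X)) (s : Finset A[X])
    {e : ℕ → A[X]} (he : ∀ j, φ (e j) ≠ 0) :
    ∃ ψ : A[X] →+* ℝ, (∀ a ∈ s, SignType.sign (ψ a) = SignType.sign (φ a)) ∧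
      ∀ j, ψ (e j) ≠ 0 := by
  classical
  obtain ⟨p, hp0, hp⟩ := isAlgebraic_range_iff.1 hφ
  choose c u hc hcu using fun j => exists_mul_eq_map_C_of_isAlgebraic hφ (he j)
  obtain ⟨t, ht⟩ := IsNoetherian.noetherian (RingHom.ker φ)
  obtain ⟨χ, hχc, y, -, hy⟩ := ((h.frequently (φ := φ.comp Polynomial.C) hc).and_eventually
    (eventually_exists_isRoot hp0 hp (s ∪ t))).exists
  set ψ := Polynomial.eval₂RingHom χ y
  have hsign : ∀ f ∈ s ∪ t, SignType.sign (ψ f) = SignType.sign (φ f) := by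
    intro f hf
    rw [← eval_map_comp_C φ, ← hy f hf, Polynomial.eval_map, Polynomial.coe_eval₂RingHom]
  have hker : RingHom.ker φ ≤ RingHom.ker ψ := by
    rw [← ht, Submodule.span_le]
    intro f hf
    have hφf : φ f = 0 := ht.le (Submodule.subset_span hf)
    simpa [hφf] using hsign f (Finset.mem_union_right s hf)
  refine ⟨ψ, fun f hf => hsign f (Finset.mem_union_left t hf), fun j hj => hχc j ?_⟩
  have hmem : ψ (e j * u j - Polynomial.C (c j)) = 0 := hker (by simp [RingHom.mem_ker, hcu])
  rw [map_sub, map_mul, hj, zero_mul, zero_sub, neg_eq_zero] at hmem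
  simpa [ψ] using hmem

lemma ArtinLang.exists_of_transcendental (h : ArtinLang R A) {φ : A[X] →+* R}
    (hφ : ∀ p : A[X], p.map (φ.comp Polynomial.C) ≠ 0 →
      ¬ (p.map (φ.comp Polynomial.C)).IsRoot (φ Polynomial.X)) (s : Finset A[X])
    {e : ℕ → A[X]} (he : ∀ j, φ (e j) ≠ 0) :
    ∃ ψ : A[X] →+* ℝ, (∀ a ∈ s, SignType.sign (ψ a) = SignType.sign (φ a)) ∧
      ∀ j, ψ (e j) ≠ 0 := by
  classical
  set φ₀ := φ.comp Polynomial.C with hφ₀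
  have hemap : ∀ j, (e j).map φ₀ ≠ 0 := fun j h0 => he j (by
    rw [← eval_map_comp_C φ, ← hφ₀, h0, Polynomial.eval_zero])
  have hlead : ∀ j, φ₀ ((e j).coeff ((e j).map φ₀).natDegree) ≠ 0 := fun j => by
    rw [← Polynomial.coeff_map]
    exact Polynomial.leadingCoeff_ne_zero.2 (hemap j)
  have hzero : ∀ᶠ χ in signFilter φ₀ ℝ, ∀ f ∈ {f ∈ s | f.map φ₀ = 0}, f.map χ = 0 :=
    (Filter.eventually_all_finset _).2 fun f hf => eventually_map_eq_zero (Finset.mem_filter.1 hf).2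
  obtain ⟨χ, ⟨hχe, hχ0⟩, a, b, hab, hIoo⟩ :=
    (((h.frequently hlead).and_eventually hzero).and_eventually (eventually_exists_Ioo
      (Q := {f ∈ s | f.map φ₀ ≠ 0}) fun f hf => hφ f (Finset.mem_filter.1 hf).2)).exists
  have hχmap : ∀ j, (e j).map χ ≠ 0 := fun j h0 => hχe j (by
    rw [← Polynomial.coeff_map, h0, Polynomial.coeff_zero])
  have hcount : (⋃ j, {y | ((e j).map χ).IsRoot y}).Countable :=
    Set.countable_iUnion fun j => (Polynomial.finite_setOfPred_isRoot (hχmap j)).countable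
  obtain ⟨y, hy, hya, hyb⟩ := (hcount.dense_compl ℝ).exists_between hab
  refine ⟨Polynomial.eval₂RingHom χ y, fun f hf => ?_, fun j hj => hy ?_⟩
  · rw [← eval_map_comp_C φ, Polynomial.coe_eval₂RingHom, ← Polynomial.eval_map]
    by_cases hf0 : f.map φ₀ = 0
    · rw [hχ0 f (Finset.mem_filter.2 ⟨hf, hf0⟩), ← hφ₀, hf0, Polynomial.eval_zero,
        Polynomial.eval_zero, sign_zero, sign_zero]
    · exact hIoo y ⟨hya, hyb⟩ f (Finset.mem_filter.2 ⟨hf, hf0⟩)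
  · exact Set.mem_iUnion.2 ⟨j, by rwa [Set.mem_ofPred, Polynomial.IsRoot, Polynomial.eval_map]⟩

lemma ArtinLang.polynomial [IsNoetherianRing A] (h : ArtinLang R A) : ArtinLang R A[X] := by
  intro φ s e he
  by_cases hφ : IsAlgebraic (φ.comp Polynomial.C).range (φ Polynomial.X)
  · exact h.exists_of_isAlgebraic hφ s he
  · exact h.exists_of_transcendental
      (fun p hp0 hp => hφ (isAlgebraic_range_iff.2 ⟨p, hp0, hp⟩)) s he

theorem artinLang_mvPolynomial (R : Type*) [Field R] [LinearOrder R] [IsStrictOrderedRing R]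
    [PolynomialIVT R] (n : ℕ) : ArtinLang R (MvPolynomial (Fin n) ℝ) := by
  induction n with
  | zero => exact artinLang_real.of_ringEquiv (isEmptyRingEquiv ℝ (Fin 0))
  | succ n ih => exact ih.polynomial.of_ringEquiv (finSuccEquiv ℝ n).toRingEquiv

theorem exists_forall_sign_eval_eq {n : ℕ} (φ : MvPolynomial (Fin n) ℝ →+* R)
    (s : Finset (MvPolynomial (Fin n) ℝ)) {e : ℕ → MvPolynomial (Fin n) ℝ}
    (he : ∀ j, φ (e j) ≠ 0) :
    ∃ x : Fin n → ℝ, (∀ f ∈ s, SignType.sign (eval x f) = SignType.sign (φ f)) ∧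
      ∀ j, eval x (e j) ≠ 0 := by
  obtain ⟨ψ, hψ, hne⟩ := artinLang_mvPolynomial R n φ s e he
  have heval : ∀ f, ψ f = eval (fun i => ψ (X i)) f := DFunLike.congr_fun (ringHom_ext
    (fun r => (DFunLike.congr_fun (Subsingleton.elim (ψ.comp C) (RingHom.id ℝ)) r).trans
      (eval_C r).symm)
    (fun i => by simp))
  exact ⟨fun i => ψ (X i), by simpa only [← heval] using hψ, by simpa only [← heval] using hne⟩

end ArtinLang

section Orderings

variable {B : Type*} [CommRing B]

/-- The subsemiring `T + xT` generated by a subsemiring `T` containing all squares and an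
element `x`. -/
def adjoin (T : Subsemiring B) (hT : ∀ y, IsSquare y → y ∈ T) (x : B) : Subsemiring B where
  carrier := {z | ∃ a ∈ T, ∃ b ∈ T, z = a + x * b}
  zero_mem' := ⟨0, T.zero_mem, 0, T.zero_mem, by simp⟩
  one_mem' := ⟨1, T.one_mem, 0, T.zero_mem, by simp⟩
  add_mem' := by
    rintro _ _ ⟨a, ha, b, hb, rfl⟩ ⟨c, hc, d, hd, rfl⟩
    exact ⟨a + c, T.add_mem ha hc, b + d, T.add_mem hb hd, by ring⟩
  mul_mem' := by
    rintro _ _ ⟨a, ha, b, hb, rfl⟩ ⟨c, hc, d, hd, rfl⟩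
    exact ⟨a * c + x * x * (b * d),
      T.add_mem (T.mul_mem ha hc) (T.mul_mem (hT _ ⟨x, rfl⟩) (T.mul_mem hb hd)), a * d + b * c,
      T.add_mem (T.mul_mem ha hd) (T.mul_mem hb hc), by ring⟩

section Adjoin

variable {T : Subsemiring B} {hT : ∀ y, IsSquare y → y ∈ T} {x : B}

lemma mem_adjoin {z : B} : z ∈ adjoin T hT x ↔ ∃ a ∈ T, ∃ b ∈ T, z = a + x * b := Iff.rfl

lemma le_adjoin : T ≤ adjoin T hT x := fun a ha => ⟨a, ha, 0, T.zero_mem, by simp⟩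

lemma self_mem_adjoin : x ∈ adjoin T hT x := ⟨0, T.zero_mem, 1, T.one_mem, by simp⟩

end Adjoin

lemma isOrdering_of_maximal {P : RingPreordering B}
    (hP : ∀ Q : RingPreordering B, P ≤ Q → Q ≤ P) : P.IsOrdering := by
  have hsq : ∀ y, IsSquare y → y ∈ P.toSubsemiring := fun y hy => P.mem_of_isSquare hy
  have hneg : ∀ x, x ∉ P → ∃ a ∈ P, ∃ b ∈ P, -1 = a + x * b := by
    intro x hx
    by_contra hne
    exact hx (hP ⟨adjoin P.toSubsemiring hsq x, fun hy => le_adjoin (hsq _ hy),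
      fun h => hne (mem_adjoin.1 h)⟩ (le_adjoin (hT := hsq)) (self_mem_adjoin (hT := hsq)))
  refine RingPreordering.isOrdering_iff.2 fun x y hxy => ?_
  by_contra! hcon
  obtain ⟨a, ha, b, hb, hab⟩ := hneg x hcon.1
  obtain ⟨c, hc, d, hd, hcd⟩ := hneg y hcon.2
  refine P.neg_one_notMem ?_
  have h : (-1 : B) = -(x * y) * (b * d) + (a + c + a * c) := by
    linear_combination (1 + c) * hab - x * b * hcd
  rw [h]
  exact add_mem (mul_mem hxy (mul_mem hb hd)) (add_mem (add_mem ha hc) (mul_mem ha hc))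

theorem exists_isOrdering_ge (T : RingPreordering B) :
    ∃ P : RingPreordering B, T ≤ P ∧ P.IsOrdering := by
  obtain ⟨P, hTP, hP⟩ := zorn_le_nonempty_Ici₀ T (fun c _ hc y hy => by
    have hdir : DirectedOn (· ≤ ·) (RingPreordering.toSubsemiring '' c) :=
      directedOn_image.2 hc.directedOn
    have hmem : ∀ z ∈ c, z.toSubsemiring ≤ sSup (RingPreordering.toSubsemiring '' c) :=
      fun z hz => le_sSup (Set.mem_image_of_mem _ hz)
    refine ⟨⟨sSup (RingPreordering.toSubsemiring '' c),
      fun hx => hmem y hy (y.mem_of_isSquare hx), fun h => ?_⟩, hmem⟩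
    obtain ⟨_, ⟨z, -, rfl⟩, hz⟩ :=
      (Subsemiring.mem_sSup_of_directedOn ⟨_, Set.mem_image_of_mem _ hy⟩ hdir).1 h
    exact z.neg_one_notMem hz) T le_rfl
  exact ⟨P, hTP, isOrdering_of_maximal fun Q hQ => hP hQ⟩

end Orderings

section SignChange

open scoped Polynomial

variable {K : Type*} [Field K] [LinearOrder K] [IsStrictOrderedRing K]

/-- The polynomials `c h²` with `c ≥ 0`. -/
def weightedSquares (K : Type*) [Field K] [LinearOrder K] [IsStrictOrderedRing K] :
    Submonoid K[X] where
  carrier := {g | ∃ c : K, 0 ≤ c ∧ ∃ h : K[X], g = Polynomial.C c * (h * h)}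
  one_mem' := ⟨1, zero_le_one, 1, by simp⟩
  mul_mem' := by
    rintro _ _ ⟨c, hc, h, rfl⟩ ⟨d, hd, k, rfl⟩
    exact ⟨c * d, mul_nonneg hc hd, h * k, by rw [Polynomial.C_mul]; ring⟩

lemma eval_nonneg_of_mem_weightedSquares_closure {g : K[X]}
    (hg : g ∈ (weightedSquares K).subsemiringClosure) (x : K) : 0 ≤ g.eval x := by
  have hle : AddSubmonoid.closure (weightedSquares K : Set K[X]) ≤
      ((Subsemiring.nonneg K).comap (Polynomial.evalRingHom x)).toAddSubmonoid := by
    rw [AddSubmonoid.closure_le]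
    rintro _ ⟨c, hc, h, rfl⟩
    simpa using mul_nonneg hc (mul_self_nonneg (h.eval x))
  exact hle hg

lemma exists_dvd_sub_natDegree_le {f g : K[X]} (hf : f.natDegree ≠ 0)
    (hg : g ∈ (weightedSquares K).subsemiringClosure) :
    ∃ r ∈ (weightedSquares K).subsemiringClosure,
      f ∣ g - r ∧ r.natDegree ≤ 2 * (f.natDegree - 1) := by
  induction hg using AddSubmonoid.closure_induction with
  | zero => exact ⟨0, zero_mem _, by simp, by simp⟩
  | add g₁ g₂ _ _ h₁ h₂ =>
    obtain ⟨r₁, hr₁, hdvd₁, hdeg₁⟩ := h₁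
    obtain ⟨r₂, hr₂, hdvd₂, hdeg₂⟩ := h₂
    refine ⟨r₁ + r₂, add_mem hr₁ hr₂, ?_, Polynomial.natDegree_add_le_of_degree_le hdeg₁ hdeg₂⟩
    rw [add_sub_add_comm]
    exact dvd_add hdvd₁ hdvd₂
  | mem g hg =>
    obtain ⟨c, hc, h, rfl⟩ := hg
    refine ⟨Polynomial.C c * (h % f * (h % f)),
      AddSubmonoid.subset_closure ⟨c, hc, h % f, rfl⟩, ?_, ?_⟩
    · rw [← mul_sub, mul_self_sub_mul_self]
      have hdvd : f ∣ h - h % f :=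
        ⟨h / f, sub_eq_of_eq_add' (EuclideanDomain.mod_add_div h f).symm⟩
      exact (hdvd.mul_left _).mul_left _
    · have := Polynomial.natDegree_mod_lt h hf
      have := Polynomial.natDegree_C_mul_le c (h % f * (h % f))
      have := Polynomial.natDegree_mul_le (p := h % f) (q := h % f)
      lia

/-- Descent on the degree: once `g` is reduced modulo `f`, the cofactor of `f` in `1 + g` changes
sign where `f` does, has smaller degree, and divides `1 + g` as well. -/
lemma not_dvd_one_add_of_eval_mul_eval_neg {f g : K[X]} {a b : K}
    (hf : f.eval a * f.eval b < 0) (hg : g ∈ (weightedSquares K).subsemiringClosure) :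
    ¬ f ∣ 1 + g := by
  induction hd : f.natDegree using Nat.strong_induction_on generalizing f g with
  | _ d ih =>
  intro hdvd
  have hf0 : f.natDegree ≠ 0 := by
    intro h0
    rw [Polynomial.eq_C_of_natDegree_eq_zero h0, Polynomial.eval_C, Polynomial.eval_C] at hf
    exact hf.not_ge (mul_self_nonneg _)
  obtain ⟨r, hr, hgr, hrdeg⟩ := exists_dvd_sub_natDegree_le hf0 hg
  obtain ⟨q, hq⟩ : f ∣ 1 + r := by
    have := dvd_sub hdvd hgr
    rwa [add_sub_assoc, sub_sub_cancel] at this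
  have hpos : ∀ x, 0 < f.eval x * q.eval x := fun x => by
    rw [← Polynomial.eval_mul, ← hq, Polynomial.eval_add, Polynomial.eval_one]
    exact add_pos_of_pos_of_nonneg one_pos (eval_nonneg_of_mem_weightedSquares_closure hr x)
  have hq0 : q ≠ 0 := by
    rintro rfl
    simpa using hpos a
  have hqdeg : q.natDegree < d := by
    have h1 := Polynomial.natDegree_mul (p := f) (by rintro rfl; simp at hf0) hq0
    have h2 : (1 + r).natDegree ≤ 2 * (f.natDegree - 1) :=
      Polynomial.natDegree_add_le_of_degree_le (by simp) hrdeg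
    rw [← hq] at h1
    lia
  have hqab : q.eval a * q.eval b < 0 := by
    have h := mul_pos (hpos a) (hpos b)
    rw [mul_mul_mul_comm] at h
    exact neg_of_mul_pos_right h hf.le
  exact ih _ hqdeg hqab hr rfl (Dvd.intro_left f hq.symm)

lemma exists_irreducible_dvd_eval_mul_eval_neg {f : K[X]} {a b : K}
    (hf : f.eval a * f.eval b < 0) :
    ∃ p, Irreducible p ∧ p ∣ f ∧ p.eval a * p.eval b < 0 := by
  induction f using WfDvdMonoid.induction_on_irreducible with
  | zero => simp at hf
  | unit u hu =>
    obtain ⟨c, -, rfl⟩ := Polynomial.isUnit_iff.1 hu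
    rw [Polynomial.eval_C, Polynomial.eval_C] at hf
    exact absurd hf (mul_self_nonneg _).not_gt
  | mul f p _ hp ih =>
    by_cases hneg : p.eval a * p.eval b < 0
    · exact ⟨p, hp, dvd_mul_right _ _, hneg⟩
    · rw [Polynomial.eval_mul, Polynomial.eval_mul, mul_mul_mul_comm] at hf
      obtain ⟨q, hq, hqf, hqneg⟩ := ih (neg_of_mul_neg_right hf (not_lt.1 hneg))
      exact ⟨q, hq, hqf.mul_left _, hqneg⟩

lemma mem_Icc_of_irreducible_of_isRoot {f : K[X]} (hirr : Irreducible f) {a b c : K} (hab : a ≤ b)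
    (hf : f.eval a * f.eval b < 0) (hc : f.IsRoot c) : c ∈ Set.Icc a b := by
  obtain ⟨u, hu⟩ := Polynomial.dvd_iff_isRoot.2 hc
  obtain ⟨r, -, rfl⟩ := Polynomial.isUnit_iff.1
    ((hirr.isUnit_or_isUnit hu).resolve_left (Polynomial.not_isUnit_X_sub_C c))
  have heval : f.eval a * f.eval b = (a - c) * (b - c) * (r * r) := by
    rw [hu]
    simp only [Polynomial.eval_mul, Polynomial.eval_sub, Polynomial.eval_X, Polynomial.eval_C]
    ring
  rcases mul_neg_iff.1 (neg_of_mul_neg_left (heval ▸ hf) (mul_self_nonneg r)) with h | h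
  · linarith
  · exact ⟨(sub_neg.1 h.1).le, (sub_pos.1 h.2).le⟩

lemma exists_ringPreordering_adjoinRoot {f : K[X]} {a b : K} (hf : f.eval a * f.eval b < 0) :
    ∃ P : RingPreordering (AdjoinRoot f), ∀ c : K, 0 ≤ c → AdjoinRoot.of f c ∈ P := by
  refine ⟨⟨(weightedSquares K).subsemiringClosure.map (AdjoinRoot.mk f), ?_, ?_⟩, fun c hc => ?_⟩
  · rintro _ ⟨y, rfl⟩
    obtain ⟨h, rfl⟩ := AdjoinRoot.mk_surjective y
    exact ⟨h * h, AddSubmonoid.subset_closure ⟨1, zero_le_one, h, by simp⟩, map_mul _ _ _⟩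
  · rintro ⟨g, hg, h⟩
    refine not_dvd_one_add_of_eval_mul_eval_neg hf hg (AdjoinRoot.mk_eq_zero.1 ?_)
    rw [map_add, map_one, h, add_neg_cancel]
  · exact ⟨Polynomial.C c, AddSubmonoid.subset_closure ⟨c, hc, 1, by simp⟩, rfl⟩

end SignChange

section RealClosure

open scoped Polynomial

universe u

variable {B Ω : Type*} [CommRing B] [Field Ω]

/-- `P` is the set of nonnegative elements of some ordering of some subfield of `Ω`. -/
structure IsSubfieldCone (P : Subsemiring Ω) : Prop where
  neg_one_notMem : -1 ∉ P
  inv_mem {x : Ω} : x ∈ P → x⁻¹ ∈ P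
  sub_mem_or_sub_mem {x y : Ω} : x ∈ P → y ∈ P → x - y ∈ P ∨ y - x ∈ P

namespace IsSubfieldCone

variable {P : Subsemiring Ω}

/-- The subfield `P ∪ -P` ordered by the cone `P`. -/
def subfield (hP : IsSubfieldCone P) : Subfield Ω where
  carrier := {x | x ∈ P ∨ -x ∈ P}
  zero_mem' := Or.inl P.zero_mem
  one_mem' := Or.inl P.one_mem
  neg_mem' {x} hx := by simpa using hx.symm
  inv_mem' x hx := hx.imp hP.inv_mem fun h => by simpa using hP.inv_mem h
  add_mem' {x y} hx hy := by
    rcases hx with hx | hx <;> rcases hy with hy | hy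
    · exact Or.inl (P.add_mem hx hy)
    · have h := hP.sub_mem_or_sub_mem hx hy
      rwa [sub_neg_eq_add, ← neg_add', add_comm y] at h
    · have h := hP.sub_mem_or_sub_mem hy hx
      rwa [sub_neg_eq_add, ← neg_add', add_comm y] at h
    · exact Or.inr (by simpa [add_comm] using P.add_mem hx hy)
  mul_mem' {x y} hx hy := by
    rcases hx with hx | hx <;> rcases hy with hy | hy
    · exact Or.inl (P.mul_mem hx hy)
    · exact Or.inr (by simpa using P.mul_mem hx hy)
    · exact Or.inr (by simpa using P.mul_mem hx hy)
    · exact Or.inl (by simpa using P.mul_mem hx hy)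

lemma eq_zero_of_mem_of_neg_mem (hP : IsSubfieldCone P) {x : Ω} (hx : x ∈ P) (hnx : -x ∈ P) :
    x = 0 := by
  by_contra hx0
  refine hP.neg_one_notMem ?_
  have := P.mul_mem hnx (hP.inv_mem hx)
  rwa [neg_mul, mul_inv_cancel₀ hx0] at this

lemma exists_linearOrder (hP : IsSubfieldCone P) :
    ∃ (_ : LinearOrder hP.subfield) (_ : IsStrictOrderedRing hP.subfield),
      ∀ x : hP.subfield, 0 ≤ x ↔ (x : Ω) ∈ P := by
  classical
  let C : RingCone hP.subfield :=
    { P.comap hP.subfield.subtype with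
      eq_zero_of_mem_of_neg_mem' := fun hx hnx =>
        Subtype.ext (hP.eq_zero_of_mem_of_neg_mem hx hnx) }
  have : HasMemOrNegMem C := ⟨fun x => x.2⟩
  let o : LinearOrder hP.subfield := LinearOrder.mkOfAddGroupCone C
  have : IsOrderedRing hP.subfield := IsOrderedRing.mkOfCone C
  refine ⟨o, IsOrderedRing.toIsStrictOrderedRing _, fun x => ?_⟩
  change x - 0 ∈ C ↔ _
  rw [sub_zero]
  rfl

lemma exists_maximal_ge (hP : IsSubfieldCone P) :
    ∃ Q, P ≤ Q ∧ Maximal IsSubfieldCone Q := by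
  refine zorn_le_nonempty₀ {Q : Subsemiring Ω | IsSubfieldCone Q} (fun c hc hchain y hy => ?_) P hP
  have hdir : DirectedOn (· ≤ ·) c := hchain.directedOn
  have hmem := fun {x} => Subsemiring.mem_sSup_of_directedOn ⟨y, hy⟩ hdir (x := x)
  refine ⟨sSup c, ⟨fun h => ?_, fun hx => ?_, fun {x z} hx hz => ?_⟩, fun Q hQ => le_sSup hQ⟩
  · obtain ⟨Q, hQ, h⟩ := hmem.1 h
    exact (hc hQ).neg_one_notMem h
  · obtain ⟨Q, hQ, hx⟩ := hmem.1 hx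
    exact hmem.2 ⟨Q, hQ, (hc hQ).inv_mem hx⟩
  · obtain ⟨Q, hQ, hx⟩ := hmem.1 hx
    obtain ⟨Q', hQ', hz⟩ := hmem.1 hz
    obtain ⟨M, hM, hQM, hQM'⟩ := hdir Q hQ Q' hQ'
    exact ((hc hM).sub_mem_or_sub_mem (hQM hx) (hQM' hz)).imp
      (fun h => hmem.2 ⟨M, hM, h⟩) fun h => hmem.2 ⟨M, hM, h⟩

end IsSubfieldCone

/-- The quotients `θ(a) / θ(b)` with `a, b` in `P`. If `P` is an ordering of `B` and `θ` has
kernel its support, this is the order which `P` induces on the field generated by `θ(B)`. -/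
def fractionCone (P : RingPreordering B) (θ : B →+* Ω) : Subsemiring Ω where
  carrier := {z | ∃ a ∈ P, ∃ b ∈ P, θ b ≠ 0 ∧ z = θ a / θ b}
  zero_mem' := ⟨0, zero_mem P, 1, one_mem P, by simp, by simp⟩
  one_mem' := ⟨1, one_mem P, 1, one_mem P, by simp, by simp⟩
  add_mem' := by
    rintro _ _ ⟨a, ha, b, hb, hb0, rfl⟩ ⟨c, hc, d, hd, hd0, rfl⟩
    exact ⟨a * d + b * c, add_mem (mul_mem ha hd) (mul_mem hb hc), b * d, mul_mem hb hd,
      by rw [map_mul]; exact mul_ne_zero hb0 hd0, by simp [div_add_div _ _ hb0 hd0]⟩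
  mul_mem' := by
    rintro _ _ ⟨a, ha, b, hb, hb0, rfl⟩ ⟨c, hc, d, hd, hd0, rfl⟩
    exact ⟨a * c, mul_mem ha hc, b * d, mul_mem hb hd,
      by rw [map_mul]; exact mul_ne_zero hb0 hd0, by simp [div_mul_div_comm]⟩

section FractionCone

variable {P : RingPreordering B} {θ : B →+* Ω}

lemma map_mem_fractionCone {b : B} (hb : b ∈ P) : θ b ∈ fractionCone P θ :=
  ⟨b, hb, 1, one_mem P, by simp, by simp⟩

variable [P.IsOrdering]

lemma isSubfieldCone_fractionCone (hθ : RingHom.ker θ = P.support) :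
    IsSubfieldCone (fractionCone P θ) where
  neg_one_notMem := by
    rintro ⟨a, ha, b, hb, hb0, h⟩
    have hab : a + b ∈ P.support := by
      rw [← hθ, RingHom.mem_ker, map_add, ← neg_eq_iff_add_eq_zero, eq_comm]
      field_simp at h
      simpa using congrArg Neg.neg h
    refine hb0 ?_
    rw [← RingHom.mem_ker, hθ]
    exact ⟨hb, by simpa using add_mem ha hab.2⟩
  inv_mem := by
    rintro _ ⟨a, ha, b, hb, -, rfl⟩
    rcases eq_or_ne (θ a) 0 with ha0 | ha0
    · rw [ha0, zero_div, inv_zero]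
      exact zero_mem _
    · exact ⟨b, hb, a, ha, ha0, inv_div _ _⟩
  sub_mem_or_sub_mem := by
    rintro _ _ ⟨a, -, b, hb, hb0, rfl⟩ ⟨c, -, d, hd, hd0, rfl⟩
    have hbd : θ (b * d) ≠ 0 := by
      rw [map_mul]
      exact mul_ne_zero hb0 hd0
    rcases mem_or_neg_mem P (a * d - b * c) with h | h
    · exact Or.inl ⟨_, h, b * d, mul_mem hb hd, hbd, by simp [div_sub_div _ _ hb0 hd0]⟩
    · refine Or.inr ⟨_, h, b * d, mul_mem hb hd, hbd, ?_⟩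
      simp [div_sub_div _ _ hd0 hb0, mul_comm]

end FractionCone

/-- The ordering of the subfield extends to the one generated by a root of `f`. -/
lemma mem_subfield_of_aeval_eq_zero {P : Subsemiring Ω} (hP : Maximal IsSubfieldCone P)
    [LinearOrder hP.prop.subfield] [IsStrictOrderedRing hP.prop.subfield]
    (hnonneg : ∀ x : hP.prop.subfield, 0 ≤ x ↔ (x : Ω) ∈ P) {f : hP.prop.subfield[X]}
    (hf : Irreducible f) {a b : hP.prop.subfield} (hab : f.eval a * f.eval b < 0) {α : Ω}
    (hα : Polynomial.aeval α f = 0) : α ∈ hP.prop.subfield := by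
  have : Fact (Irreducible f) := ⟨hf⟩
  obtain ⟨T, hT⟩ := exists_ringPreordering_adjoinRoot hab
  obtain ⟨Q, hTQ, hQ⟩ := exists_isOrdering_ge T
  let θ : AdjoinRoot f →+* Ω := AdjoinRoot.lift hP.prop.subfield.subtype α hα
  have hθ : RingHom.ker θ = Q.support := by
    rw [Q.support_eq_bot, (RingHom.injective_iff_ker_eq_bot θ).1 θ.injective]
  have hof : ∀ c, θ (AdjoinRoot.of f c) = c := fun c => AdjoinRoot.lift_of _
  have hle : P ≤ fractionCone Q θ := fun x hx => by
    have hx' := map_mem_fractionCone (θ := θ)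
      (hTQ (hT ⟨x, Or.inl hx⟩ ((hnonneg ⟨x, Or.inl hx⟩).2 hx)))
    rwa [hof] at hx'
  have hge := hP.2 (isSubfieldCone_fractionCone hθ) hle
  have hroot : θ (AdjoinRoot.root f) = α := AdjoinRoot.lift_root _
  refine (mem_or_neg_mem Q (AdjoinRoot.root f)).imp (fun h => hge ?_) fun h => hge ?_
  · exact hroot ▸ map_mem_fractionCone h
  · rw [← hroot, ← map_neg]
    exact map_mem_fractionCone h

lemma exists_polynomialIVT_of_maximal [IsAlgClosed Ω] {P : Subsemiring Ω}
    (hP : Maximal IsSubfieldCone P) :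
    ∃ (_ : LinearOrder hP.prop.subfield) (_ : IsStrictOrderedRing hP.prop.subfield),
      PolynomialIVT hP.prop.subfield ∧ ∀ x : hP.prop.subfield, 0 ≤ x ↔ (x : Ω) ∈ P := by
  obtain ⟨_, _, hnonneg⟩ := hP.prop.exists_linearOrder
  refine ⟨‹_›, ‹_›, ⟨fun g a b hab hg => ?_⟩, hnonneg⟩
  obtain ⟨f, hf, hfg, hfab⟩ := exists_irreducible_dvd_eval_mul_eval_neg hg
  obtain ⟨α, hα⟩ := IsAlgClosed.exists_aeval_eq_zero Ω f
    (Polynomial.degree_pos_of_irreducible hf).ne'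
  let c : hP.prop.subfield := ⟨α, mem_subfield_of_aeval_eq_zero hP hnonneg hf hfab hα⟩
  have hc : f.IsRoot c := Subtype.ext
    ((Polynomial.aeval_algebraMap_apply Ω c f).symm.trans hα)
  exact ⟨c, mem_Icc_of_irreducible_of_isRoot hf hab hfab hc, hc.dvd hfg⟩

/-- The real closure of the residue field at the support of `P`. -/
theorem exists_polynomialIVT_ringHom_nonneg_iff {B : Type u} [CommRing B] (P : RingPreordering B)
    [P.IsOrdering] :
    ∃ (R : Type u) (_ : Field R) (_ : LinearOrder R) (_ : IsStrictOrderedRing R)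
      (_ : PolynomialIVT R) (φ : B →+* R), ∀ b, 0 ≤ φ b ↔ b ∈ P := by
  let κ := P.support.ResidueField
  let θ := (algebraMap κ (AlgebraicClosure κ)).comp (algebraMap B κ)
  have hθ : RingHom.ker θ = P.support := by
    rw [RingHom.ker_comp_of_injective _ (algebraMap κ (AlgebraicClosure κ)).injective,
      Ideal.ker_algebraMap_residueField]
  obtain ⟨Q, hPQ, hQ⟩ := (isSubfieldCone_fractionCone hθ).exists_maximal_ge
  obtain ⟨_, _, _, hnonneg⟩ := exists_polynomialIVT_of_maximal hQ
  have hmem : ∀ b ∈ P, θ b ∈ Q := fun b hb => hPQ (map_mem_fractionCone hb)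
  have hsub : ∀ b, θ b ∈ hQ.prop.subfield := fun b =>
    (mem_or_neg_mem P b).imp (hmem b) fun hb => map_neg θ b ▸ hmem (-b) hb
  refine ⟨hQ.prop.subfield, inferInstance, ‹_›, ‹_›, ‹_›, θ.codRestrict _ hsub, fun b => ?_⟩
  refine (hnonneg _).trans ⟨fun hb => ?_, hmem b⟩
  refine (mem_or_neg_mem P b).elim id fun hnb => ?_
  have hker : b ∈ P.support := by
    rw [← hθ]
    exact hQ.prop.eq_zero_of_mem_of_neg_mem hb (map_neg θ b ▸ hmem (-b) hnb)
  exact hker.1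

end RealClosure

section GeneratedPreordering

variable {E : Type*} [CommRing E] {m : ℕ} {g : Fin m → E}

lemma mul_prod_mem_genPreordering (g : Fin m → E) {s : E} (hs : IsSumSq s) (ν : Fin m → Bool) :
    s * ∏ j, (if ν j then g j else 1) ∈ genPreordering g := by
  classical
  refine ⟨Pi.single ν s, fun μ => ?_, ?_⟩
  · rcases eq_or_ne μ ν with rfl | h
    · simpa using hs
    · simp [h]
  · rw [Fintype.sum_eq_single ν fun μ hμ => by simp [hμ], Pi.single_eq_same]

lemma add_mem_genPreordering {x y : E} (hx : x ∈ genPreordering g) (hy : y ∈ genPreordering g) :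
    x + y ∈ genPreordering g := by
  obtain ⟨σ, hσ, rfl⟩ := hx
  obtain ⟨τ, hτ, rfl⟩ := hy
  exact ⟨σ + τ, fun ν => (hσ ν).add (hτ ν), by
    simp only [Pi.add_apply, add_mul, Finset.sum_add_distrib]⟩

/-- The factors common to both products give a square. -/
lemma prod_ite_mul_prod_ite (g : Fin m → E) (ν μ : Fin m → Bool) :
    (∏ j, (if ν j then g j else 1)) * ∏ j, (if μ j then g j else 1) =
      (∏ j, (if ν j && μ j then g j else 1)) * (∏ j, (if ν j && μ j then g j else 1)) *
        ∏ j, (if xor (ν j) (μ j) then g j else 1) := by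
  simp only [← Finset.prod_mul_distrib]
  refine Finset.prod_congr rfl fun j _ => ?_
  cases ν j <;> cases μ j <;> simp

lemma mul_mem_genPreordering {x y : E} (hx : x ∈ genPreordering g) (hy : y ∈ genPreordering g) :
    x * y ∈ genPreordering g := by
  obtain ⟨σ, hσ, rfl⟩ := hx
  obtain ⟨τ, hτ, rfl⟩ := hy
  rw [Finset.sum_mul_sum, ← Finset.sum_product']
  refine Finset.sum_induction _ (· ∈ genPreordering g) (fun _ _ => add_mem_genPreordering)
    ⟨0, fun _ => IsSumSq.zero, by simp⟩ fun ⟨ν, μ⟩ _ => ?_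
  rw [mul_mul_mul_comm, prod_ite_mul_prod_ite, ← mul_assoc]
  exact mul_prod_mem_genPreordering g (((hσ ν).mul (hτ μ)).mul (IsSumSq.mul_self _)) _

/-- `genPreordering g` as a subsemiring. -/
def preord (g : Fin m → E) : Subsemiring E where
  carrier := genPreordering g
  zero_mem' := by simpa using mul_prod_mem_genPreordering g IsSumSq.zero fun _ => false
  one_mem' := by simpa using mul_prod_mem_genPreordering g IsSumSq.one fun _ => false
  add_mem' := add_mem_genPreordering
  mul_mem' := mul_mem_genPreordering

lemma mem_preord {x : E} : x ∈ preord g ↔ x ∈ genPreordering g := Iff.rfl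

lemma isSquare_mem_preord (x : E) (hx : IsSquare x) : x ∈ preord g := by
  simpa [mem_preord] using mul_prod_mem_genPreordering g hx.isSumSq fun _ => false

lemma gen_mem_preord (i : Fin m) : g i ∈ preord g := by
  classical
  simpa [mem_preord] using mul_prod_mem_genPreordering g IsSumSq.one fun j => decide (j = i)

lemma preord_le {T : Subsemiring E} (hT : ∀ x, IsSquare x → x ∈ T) (hg : ∀ i, g i ∈ T) :
    preord g ≤ T := by
  rintro _ ⟨σ, hσ, rfl⟩
  have hsq : AddSubmonoid.sumSq E ≤ T.toAddSubmonoid :=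
    AddSubmonoid.closure_isSquare.symm.trans_le (AddSubmonoid.closure_le.2 hT)
  refine T.sum_mem fun ν _ => T.mul_mem (hsq (hσ ν)) (T.prod_mem fun j _ => ?_)
  split_ifs
  exacts [hg j, T.one_mem]

end GeneratedPreordering

section Positivstellensatz

universe u

theorem exists_mul_sub_one_mem {B : Type u} [CommRing B] {T : Subsemiring B}
    (hT : ∀ y, IsSquare y → y ∈ T) {f : B}
    (hf : ∀ (R : Type u) [Field R] [LinearOrder R] [IsStrictOrderedRing R] [PolynomialIVT R]
      (φ : B →+* R), (∀ t ∈ T, 0 ≤ φ t) → 0 < φ f) : ∃ s ∈ T, s * f - 1 ∈ T := by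
  by_cases hneg : -1 ∈ adjoin T hT (-f)
  · obtain ⟨a, ha, b, hb, hab⟩ := mem_adjoin.1 hneg
    refine ⟨b, hb, ?_⟩
    rwa [show b * f - 1 = a by linear_combination hab]
  obtain ⟨P, hTP, hP⟩ := exists_isOrdering_ge
    ⟨adjoin T hT (-f), fun hy => le_adjoin (hT _ hy), hneg⟩
  obtain ⟨R, _, _, _, _, φ, hφ⟩ := exists_polynomialIVT_ringHom_nonneg_iff P
  have hle : adjoin T hT (-f) ≤ P.toSubsemiring := hTP
  have hnf : 0 ≤ φ (-f) := (hφ _).2 (hle self_mem_adjoin)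
  rw [map_neg, Left.nonneg_neg_iff] at hnf
  exact absurd (hf R φ fun t ht => (hφ t).2 (hle (le_adjoin ht))) hnf.not_gt

variable {n m : ℕ} {g : Fin m → MvPolynomial (Fin n) ℝ}

lemma exists_mem_KS_sign_eval_eq {R : Type*} [Field R] [LinearOrder R] [IsStrictOrderedRing R]
    [PolynomialIVT R] {φ : MvPolynomial (Fin n) ℝ →+* R} (hg : ∀ i, 0 ≤ φ (g i))
    (f : MvPolynomial (Fin n) ℝ) {e : ℕ → MvPolynomial (Fin n) ℝ} (he : ∀ j, φ (e j) ≠ 0) :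
    ∃ x ∈ KS g, SignType.sign (eval x f) = SignType.sign (φ f) ∧ ∀ j, eval x (e j) ≠ 0 := by
  classical
  obtain ⟨x, hx, hxe⟩ := exists_forall_sign_eval_eq φ (insert f (Finset.univ.image g)) he
  refine ⟨x, fun i => ?_, hx f (Finset.mem_insert_self _ _), hxe⟩
  rw [← sign_nonneg_iff, hx (g i) (by simp), sign_nonneg_iff]
  exact hg i

theorem map_pos_of_forall_mem_KS {R : Type*} [Field R] [LinearOrder R] [IsStrictOrderedRing R]
    [PolynomialIVT R] {φ : MvPolynomial (Fin n) ℝ →+* R} (hg : ∀ i, 0 ≤ φ (g i))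
    {f : MvPolynomial (Fin n) ℝ} (hf : ∀ x ∈ KS g, 0 < eval x f) : 0 < φ f := by
  obtain ⟨x, hx, hsign, -⟩ := exists_mem_KS_sign_eval_eq hg f (e := fun _ => 1) fun _ => by simp
  rw [← sign_eq_one_iff, ← hsign, sign_eq_one_iff]
  exact hf x hx

lemma map_nonneg_of_forall_mem_KS {R : Type*} [Field R] [LinearOrder R] [IsStrictOrderedRing R]
    [PolynomialIVT R] {φ : MvPolynomial (Fin n) ℝ →+* R} (hg : ∀ i, 0 ≤ φ (g i))
    {f : MvPolynomial (Fin n) ℝ} (hf : ∀ x ∈ KS g, 0 ≤ eval x f) : 0 ≤ φ f := by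
  obtain ⟨x, hx, hsign, -⟩ := exists_mem_KS_sign_eval_eq hg f (e := fun _ => 1) fun _ => by simp
  rw [← sign_nonneg_iff, ← hsign, sign_nonneg_iff]
  exact hf x hx

theorem exists_one_add_mul_mem_preord {f : MvPolynomial (Fin n) ℝ}
    (hf : ∀ x ∈ KS g, 0 < eval x f) : ∃ t ∈ preord g, (1 + t) * f ∈ preord g := by
  obtain ⟨s, hs, hsf⟩ := exists_mul_sub_one_mem (f := f) isSquare_mem_preord
    fun R _ _ _ _ φ hφ => map_pos_of_forall_mem_KS (fun i => hφ _ (gen_mem_preord i)) hf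
  refine ⟨s * f - 1, hsf, ?_⟩
  rw [show (1 + (s * f - 1)) * f = s * (f * f) by ring]
  exact (preord g).mul_mem hs (isSquare_mem_preord _ ⟨f, rfl⟩)

end Positivstellensatz

section BoundedElements

variable {E : Type*} [CommRing E] [Algebra ℝ E] {T : Subsemiring E}

lemma algebraMap_mem_of_nonneg (hT : ∀ x, IsSquare x → x ∈ T) {r : ℝ} (hr : 0 ≤ r) :
    algebraMap ℝ E r ∈ T :=
  hT _ ((Real.isSquare_iff.2 hr).map (algebraMap ℝ E))

lemma mem_of_natCast_mul_mem (hT : ∀ x, IsSquare x → x ∈ T) {N : ℕ} (hN : N ≠ 0) {x : E}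
    (h : N * x ∈ T) : x ∈ T := by
  have hinv : algebraMap ℝ E (N : ℝ)⁻¹ * N = 1 := by
    rw [← map_natCast (algebraMap ℝ E), ← map_mul, inv_mul_cancel₀ (Nat.cast_ne_zero.2 hN), map_one]
  have := T.mul_mem (algebraMap_mem_of_nonneg hT (inv_nonneg.2 N.cast_nonneg)) h
  rwa [← mul_assoc, hinv, one_mul] at this

/-- The elements which lie between two constants in the order given by `T`. -/
def boundedSubalgebra (T : Subsemiring E) (hT : ∀ x, IsSquare x → x ∈ T) : Subalgebra ℝ E where
  carrier := {x | ∃ N : ℕ, N - x ∈ T ∧ N + x ∈ T}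
  add_mem' := by
    rintro x y ⟨N, hx, hx'⟩ ⟨M, hy, hy'⟩
    refine ⟨N + M, ?_, ?_⟩ <;> push_cast
    · rw [add_sub_add_comm]
      exact T.add_mem hx hy
    · rw [add_add_add_comm]
      exact T.add_mem hx' hy'
  mul_mem' := by
    rintro x y ⟨N, hx, hx'⟩ ⟨M, hy, hy'⟩
    refine ⟨N * M, mem_of_natCast_mul_mem hT two_ne_zero ?_,
      mem_of_natCast_mul_mem hT two_ne_zero ?_⟩ <;> push_cast
    · rw [show 2 * (N * M - x * y) = (N - x) * (M + y) + (N + x) * (M - y) by ring]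
      exact T.add_mem (T.mul_mem hx hy') (T.mul_mem hx' hy)
    · rw [show 2 * (N * M + x * y) = (N - x) * (M - y) + (N + x) * (M + y) by ring]
      exact T.add_mem (T.mul_mem hx hy) (T.mul_mem hx' hy')
  algebraMap_mem' r := by
    obtain ⟨N, hN⟩ := exists_nat_ge |r|
    refine ⟨N, ?_, ?_⟩ <;> rw [← map_natCast (algebraMap ℝ E)]
    · rw [← map_sub]
      exact algebraMap_mem_of_nonneg hT (sub_nonneg.2 ((le_abs_self r).trans hN))
    · rw [← map_add]
      exact algebraMap_mem_of_nonneg hT (by linarith [neg_abs_le r])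

variable {hT : ∀ x, IsSquare x → x ∈ T}

lemma mem_boundedSubalgebra_of_mem {x b : E} (hx : x ∈ T) (hb : b ∈ boundedSubalgebra T hT)
    (hxb : b - x ∈ T) : x ∈ boundedSubalgebra T hT := by
  obtain ⟨N, hN, -⟩ := hb
  exact ⟨N, by simpa using T.add_mem hN hxb, T.add_mem (natCast_mem T N) hx⟩

lemma mem_boundedSubalgebra_of_sub_sq_mem {x b : E} (hb : b ∈ boundedSubalgebra T hT)
    (hxb : b - x ^ 2 ∈ T) : x ∈ boundedSubalgebra T hT := by
  obtain ⟨N, hN, -⟩ := hb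
  have hsq : N - x ^ 2 ∈ T := by simpa using T.add_mem hN hxb
  refine ⟨N + 1, mem_of_natCast_mul_mem hT two_ne_zero ?_,
    mem_of_natCast_mul_mem hT two_ne_zero ?_⟩ <;> push_cast
  · rw [show 2 * (N + 1 - x) = (N - x ^ 2) + (x - 1) * (x - 1) + (N + 1) by ring]
    exact T.add_mem (T.add_mem hsq (hT _ ⟨_, rfl⟩)) (T.add_mem (natCast_mem T N) T.one_mem)
  · rw [show 2 * (N + 1 + x) = (N - x ^ 2) + (x + 1) * (x + 1) + (N + 1) by ring]
    exact T.add_mem (T.add_mem hsq (hT _ ⟨_, rfl⟩)) (T.add_mem (natCast_mem T N) T.one_mem)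

lemma mem_boundedSubalgebra_of_sub_sum_sq_mem {ι : Type*} {s : Finset ι} {x : ι → E} {b : E}
    (hb : b ∈ boundedSubalgebra T hT) (h : b - ∑ i ∈ s, x i ^ 2 ∈ T) {i : ι} (hi : i ∈ s) :
    x i ∈ boundedSubalgebra T hT := by
  classical
  refine mem_boundedSubalgebra_of_sub_sq_mem hb ?_
  have := T.add_mem h (T.sum_mem fun j (_ : j ∈ s.erase i) => hT _ (IsSquare.sq (x j)))
  rwa [← Finset.add_sum_erase s _ hi, ← sub_sub, sub_add_cancel] at this

/-- If `v ^ (M + 1) ≤ c v ^ M + d`, subtracting `v ^ (M - 1) (v - c)²` lowers the degree. -/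
lemma add_sub_mem_of_pow_succ_le (hT : ∀ x, IsSquare x → x ∈ T) {v : E} (hv : v ∈ T) {c d : ℕ}
    (hc : c ≠ 0) {M : ℕ} (h : c * v ^ M + d - v ^ (M + 1) ∈ T) : c + d - v ∈ T := by
  induction M with
  | zero => simpa using h
  | succ M ih =>
    refine ih (mem_of_natCast_mul_mem hT hc ?_)
    obtain ⟨c, rfl⟩ := Nat.exists_eq_succ_of_ne_zero hc
    have hsq := T.mul_mem (T.pow_mem hv M) (hT _ (IsSquare.mul_self (v - (c + 1 : ℕ))))
    convert T.add_mem (T.add_mem h hsq) (natCast_mem T (c * d)) using 1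
    push_cast
    ring

lemma exists_map_mul_pow_mem {σ : Type*} {A : Subalgebra ℝ E} (φ : MvPolynomial σ ℝ →ₐ[ℝ] E)
    {w : E} (hw : w ∈ A) (hX : ∀ i, φ (X i) * w ∈ A) (f : MvPolynomial σ ℝ) :
    ∃ l, φ f * w ^ l ∈ A := by
  induction f using MvPolynomial.induction_on with
  | C r => exact ⟨0, by simp⟩
  | add f f' hf hf' =>
    obtain ⟨l, hl⟩ := hf
    obtain ⟨l', hl'⟩ := hf'
    refine ⟨l + l', ?_⟩
    rw [show φ (f + f') * w ^ (l + l') = φ f * w ^ l * w ^ l' + φ f' * w ^ l' * w ^ l by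
      rw [map_add]; ring]
    exact add_mem (mul_mem hl (pow_mem hw _)) (mul_mem hl' (pow_mem hw _))
  | mul_X f i hf =>
    obtain ⟨l, hl⟩ := hf
    refine ⟨l + 1, ?_⟩
    rw [map_mul, pow_succ, mul_mul_mul_comm]
    exact mul_mem hl (hX i)

end BoundedElements

section Growth

variable {E : Type*} [CommRing E] [Algebra ℝ E] {T : Subsemiring E}
  {hT : ∀ x, IsSquare x → x ∈ T}

lemma mem_boundedSubalgebra_of_one_add_mul_mem {v t : E} (hv : v ∈ T) (ht : t ∈ T) {κ N M : ℕ}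
    (hκ : κ ≠ 0) (hN : N ≠ 0) (hvκ : (1 + t) * (κ - v) ∈ T) (htN : (1 + t) * (N - t * v ^ M) ∈ T) :
    v ∈ boundedSubalgebra T hT ∧ t * v ^ M ∈ boundedSubalgebra T hT := by
  have hvM : v ^ M ∈ T := T.pow_mem hv M
  have hτ : t * v ^ M ∈ T := T.mul_mem ht hvM
  have hτN : N + v ^ M - t * v ^ M ∈ T := by
    refine mem_of_natCast_mul_mem hT hN ?_
    convert T.add_mem (T.add_mem (T.mul_mem hvM htN) (hT _ (IsSquare.mul_self (N - t * v ^ M))))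
      (T.mul_mem hτ hvM) using 1
    ring
  have hpow : (2 * κ : ℕ) * v ^ M + (κ * N : ℕ) - v ^ (M + 1) ∈ T := by
    convert T.add_mem (T.add_mem (T.mul_mem hvM hvκ) (T.mul_mem hτ hv))
      (T.mul_mem (natCast_mem T κ) hτN) using 1
    push_cast
    ring
  have hvH : v ∈ boundedSubalgebra T hT :=
    mem_boundedSubalgebra_of_mem hv (add_mem (natCast_mem _ _) (natCast_mem _ _))
      (add_sub_mem_of_pow_succ_le hT hv (mul_ne_zero two_ne_zero hκ) hpow)
  exact ⟨hvH, mem_boundedSubalgebra_of_mem hτ (add_mem (natCast_mem _ N) (pow_mem hvH M)) hτN⟩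

lemma mul_mem_boundedSubalgebra_of_one_add_mul_mem {ι : Type*} [Fintype ι] {x : ι → E} {y t : E}
    (ht : t ∈ T) {κ M : ℕ} (hy : y ^ 2 ∈ boundedSubalgebra T hT)
    (htH : t * (y ^ 2) ^ M ∈ boundedSubalgebra T hT)
    (h : (1 + t) * (κ - y ^ 2 - ∑ i, (x i * y) ^ 2) ∈ T) (i : ι) :
    x i * (y ^ 2) ^ (M + 1) ∈ boundedSubalgebra T hT := by
  set v := y ^ 2 with hv
  have hvT : v ∈ T := hT _ (IsSquare.sq y)
  have hsum : ∑ i, (x i * y) ^ 2 ∈ T := T.sum_mem fun i _ => hT _ (IsSquare.sq _)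
  refine mem_boundedSubalgebra_of_sub_sum_sq_mem (x := fun i => x i * v ^ (M + 1))
    (b := κ * v ^ (M + 1) * (v ^ M + t * v ^ M))
    (mul_mem (mul_mem (natCast_mem _ _) (pow_mem hy _)) (add_mem (pow_mem hy _) htH)) ?_
    (Finset.mem_univ i)
  have hsq : ∀ i, (x i * v ^ (M + 1)) ^ 2 = v ^ (2 * M + 1) * (x i * y) ^ 2 := fun i => by
    rw [hv]
    ring
  simp only [hsq, ← Finset.mul_sum]
  convert T.add_mem (T.add_mem (T.mul_mem (T.pow_mem hvT (2 * M + 1)) h)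
    (T.mul_mem (T.mul_mem (T.pow_mem hvT (2 * M + 1)) (T.add_mem T.one_mem ht)) hvT))
    (T.mul_mem (T.mul_mem (T.pow_mem hvT (2 * M + 1)) ht) hsum) using 1
  ring

variable {n m : ℕ} {g : Fin m → MvPolynomial (Fin n) ℝ}

/-- The polynomial `(k + 2) p² - 1 - ∑ Xᵢ²`, positive wherever `1 ≤ p` and `∑ xᵢ² ≤ k p`. -/
def growthPolynomial {σ : Type*} [Fintype σ] (p : MvPolynomial σ ℝ) (k : ℕ) : MvPolynomial σ ℝ :=
  ((k + 2 : ℕ) : MvPolynomial σ ℝ) * p ^ 2 - 1 - ∑ i, X i ^ 2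

lemma eval_growthPolynomial_pos {σ : Type*} [Fintype σ] {p : MvPolynomial σ ℝ} {k : ℕ} {x : σ → ℝ}
    (hp : 1 ≤ eval x p) (hgrow : ∑ i, x i ^ 2 ≤ k * eval x p) :
    0 < eval x (growthPolynomial p k) := by
  simp only [growthPolynomial, map_sub, map_mul, map_natCast, map_pow, map_one, map_sum,
    eval_X]
  push_cast
  nlinarith [mul_nonneg k.cast_nonneg (mul_nonneg (sub_nonneg.2 hp) (zero_le_one.trans hp))]

lemma map_growthPolynomial_mul_sq {σ : Type*} [Fintype σ] (φ : MvPolynomial σ ℝ →ₐ[ℝ] E)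
    {p : MvPolynomial σ ℝ} {y : E} (hpy : φ p * y = 1) (k : ℕ) :
    φ (growthPolynomial p k) * y ^ 2 =
      (k + 2 : ℕ) - y ^ 2 - ∑ i, (φ (X i) * y) ^ 2 := by
  simp only [growthPolynomial, map_sub, map_mul, map_natCast, map_pow, map_one, map_sum,
    sub_mul, Finset.sum_mul, mul_pow, one_mul]
  rw [mul_assoc, ← mul_pow, hpy, one_pow, mul_one]

/-- As soon as the growth polynomial counts as nonnegative, `y` and all `Xᵢ y` are bounded. -/
lemma exists_sub_map_mul_pow_mem_adjoin (hT : ∀ x, IsSquare x → x ∈ T) {σ : Type*} [Fintype σ]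
    (φ : MvPolynomial σ ℝ →ₐ[ℝ] E) {p : MvPolynomial σ ℝ} {y : E} (hpy : φ p * y = 1) (k : ℕ)
    (f : MvPolynomial σ ℝ) :
    ∃ N M : ℕ, N ≠ 0 ∧ N - φ f * (y ^ 2) ^ M ∈ adjoin T hT (φ (growthPolynomial p k)) := by
  have hT' : ∀ z, IsSquare z → z ∈ adjoin T hT (φ (growthPolynomial p k)) :=
    fun z hz => le_adjoin (hT z hz)
  have hγ : (k + 2 : ℕ) - y ^ 2 - ∑ i, (φ (X i) * y) ^ 2 ∈
      adjoin T hT (φ (growthPolynomial p k)) := by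
    rw [← map_growthPolynomial_mul_sq φ hpy]
    exact mul_mem self_mem_adjoin (hT' _ (IsSquare.sq y))
  have hy : y ∈ boundedSubalgebra _ hT' :=
    mem_boundedSubalgebra_of_sub_sq_mem (natCast_mem _ (k + 2)) (by
      simpa using add_mem hγ (sum_mem (t := Finset.univ) fun i _ =>
        hT' _ (IsSquare.sq (φ (X i) * y))))
  have hX : ∀ i, φ (X i) * y ∈ boundedSubalgebra _ hT' := fun i =>
    mem_boundedSubalgebra_of_sub_sum_sq_mem (x := fun i => φ (X i) * y) (natCast_mem _ (k + 2)) (by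
      have := add_mem hγ (hT' _ (IsSquare.sq y))
      rwa [sub_right_comm, sub_add_cancel] at this) (Finset.mem_univ i)
  obtain ⟨l, hl⟩ := exists_map_mul_pow_mem φ hy hX f
  have hl2 : φ f * (y ^ 2) ^ l ∈ boundedSubalgebra _ hT' := by
    rw [← pow_mul, two_mul, pow_add, ← mul_assoc]
    exact mul_mem hl (pow_mem hy l)
  obtain ⟨N, hN, -⟩ := hl2
  exact ⟨N + 1, l, N.succ_ne_zero, by
    simpa [add_sub_right_comm] using add_mem hN (one_mem _)⟩

theorem exists_pow_mem_boundedSubalgebra (φ : MvPolynomial (Fin n) ℝ →ₐ[ℝ] E)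
    (hg : ∀ i, φ (g i) ∈ T) {p : MvPolynomial (Fin n) ℝ} {k : ℕ} (hp1 : ∀ x ∈ KS g, 1 ≤ eval x p)
    (hgrow : ∀ x ∈ KS g, ∑ i, x i ^ 2 ≤ k * eval x p) {y : E} (hpy : φ p * y = 1) :
    ∃ l, y ^ l ∈ T ∧ y ^ l ∈ boundedSubalgebra T hT ∧
      ∀ i, φ (X i) * y ^ l ∈ boundedSubalgebra T hT := by
  have hmap : ∀ f ∈ preord g, φ f ∈ T := fun f hf =>
    preord_le (T := T.comap φ.toRingHom) (fun x hx => hT _ (hx.map φ)) hg hf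
  obtain ⟨t, ht, htγ⟩ := exists_one_add_mul_mem_preord (g := g) fun x hx =>
    eval_growthPolynomial_pos (hp1 x hx) (hgrow x hx)
  have htT : φ t ∈ T := hmap t ht
  have hγT : (1 + φ t) * φ (growthPolynomial p k) ∈ T := by simpa using hmap _ htγ
  obtain ⟨N, M, hN, hNM⟩ := exists_sub_map_mul_pow_mem_adjoin hT φ hpy k t
  obtain ⟨a, ha, b, hb, hab⟩ := mem_adjoin.1 hNM
  have hτ : (1 + φ t) * (N - φ t * (y ^ 2) ^ M) ∈ T := by
    rw [hab, mul_add, ← mul_assoc]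
    exact add_mem (mul_mem (add_mem T.one_mem htT) ha) (mul_mem hγT hb)
  have hx : (1 + φ t) * ((k + 2 : ℕ) - y ^ 2 - ∑ i, (φ (X i) * y) ^ 2) ∈ T := by
    rw [← map_growthPolynomial_mul_sq φ hpy, ← mul_assoc]
    exact mul_mem hγT (hT _ (IsSquare.sq y))
  have hvκ : (1 + φ t) * ((k + 2 : ℕ) - y ^ 2) ∈ T := by
    have hsum : ∑ i, (φ (X i) * y) ^ 2 ∈ T := sum_mem fun i _ => hT _ (IsSquare.sq _)
    convert add_mem hx (mul_mem (add_mem T.one_mem htT) hsum) using 1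
    ring
  obtain ⟨hvH, hτH⟩ := mem_boundedSubalgebra_of_one_add_mul_mem (hT := hT)
    (hT _ (IsSquare.sq y)) htT (k + 1).succ_ne_zero hN hvκ hτ
  refine ⟨2 * (M + 1), ?_, ?_, fun i => ?_⟩ <;> rw [pow_mul]
  · exact pow_mem (hT _ (IsSquare.sq y)) _
  · exact pow_mem hvH _
  · exact mul_mem_boundedSubalgebra_of_one_add_mul_mem htT hvH hτH hx i

end Growth

section Approximation

variable {E : Type*} [CommRing E] [Algebra ℝ E]

section FractionHom

variable {σ R : Type*} [Field R] {A : Subalgebra ℝ E} {φ : MvPolynomial σ ℝ →ₐ[ℝ] E} {w : A}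
  {x : σ → A} {ψ : A →+* R}

lemma exists_eq_map_mul_pow {θ : MvPolynomial σ ℝ →+* R} (hx : ∀ i, (x i : E) = φ (X i) * w)
    (hθC : ∀ r, θ (C r) = ψ (algebraMap ℝ A r)) (hθX : ∀ i, θ (X i) * ψ w = ψ (x i))
    (f : MvPolynomial σ ℝ) :
    ∃ (l : ℕ) (b : A), (b : E) = φ f * w ^ l ∧ ψ b = θ f * ψ w ^ l := by
  induction f using MvPolynomial.induction_on with
  | C r => exact ⟨0, algebraMap ℝ A r, by simp [← algebraMap_eq], by simp [hθC]⟩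
  | add f f' hf hf' =>
    obtain ⟨l, b, hb, hψb⟩ := hf
    obtain ⟨l', b', hb', hψb'⟩ := hf'
    refine ⟨l + l', b * w ^ l' + b' * w ^ l, ?_, ?_⟩
    · push_cast
      rw [hb, hb', map_add]
      ring
    · rw [map_add, map_mul, map_mul, map_pow, map_pow, hψb, hψb', map_add]
      ring
  | mul_X f i hf =>
    obtain ⟨l, b, hb, hψb⟩ := hf
    refine ⟨l + 1, b * x i, ?_, ?_⟩
    · push_cast
      rw [hb, hx, map_mul]
      ring
    · rw [map_mul, hψb, map_mul, ← hθX]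
      ring

/-- The homomorphism is `Xᵢ ↦ ψ (Xᵢ w) / ψ w`. -/
lemma exists_ringHom_of_map_ne_zero (hx : ∀ i, (x i : E) = φ (X i) * w) (hw : ψ w ≠ 0) :
    ∃ θ : MvPolynomial σ ℝ →+* R, ∀ (f : MvPolynomial σ ℝ) (l : ℕ) (b : A),
      (b : E) = φ f * w ^ l → ψ b = θ f * ψ w ^ l := by
  let θ : MvPolynomial σ ℝ →+* R :=
    eval₂Hom (ψ.comp (algebraMap ℝ A)) fun i => ψ (x i) / ψ w
  refine ⟨θ, fun f l b hb => ?_⟩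
  obtain ⟨l', b', hb', hψb'⟩ := exists_eq_map_mul_pow (θ := θ) (ψ := ψ) hx
    (fun r => by simp [θ]) (fun i => by simp [θ, div_mul_cancel₀ _ hw]) f
  have hbb' : b * w ^ l' = b' * w ^ l := Subtype.ext (by push_cast; rw [hb, hb']; ring)
  have hψ := congrArg ψ hbb'
  rw [map_mul, map_mul, map_pow, map_pow, hψb'] at hψ
  exact mul_right_cancel₀ (pow_ne_zero l' hw) (by rw [hψ]; ring)

end FractionHom

variable {T : Subsemiring E} {hT : ∀ x, IsSquare x → x ∈ T}

lemma mem_of_mul_sub_one_mem {a s : E} (ha : a ∈ boundedSubalgebra T hT) (hs : s ∈ T)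
    (hsb : s ∈ boundedSubalgebra T hT) (h : s * a - 1 ∈ T) : a ∈ T := by
  obtain ⟨N, -, hN⟩ := ha
  obtain ⟨K, hK, -⟩ := hsb
  have hK1 : (K + 1 : ℕ) - s ∈ T := by simpa [add_sub_right_comm] using add_mem hK T.one_mem
  have hdescent : ∀ j : ℕ, (K + 1 : ℕ) * a + j ∈ T → (K + 1 : ℕ) * a ∈ T := by
    intro j
    induction j with
    | zero => simp
    | succ j ih =>
      refine fun hj => ih (mem_of_natCast_mul_mem hT K.succ_ne_zero ?_)
      convert add_mem (add_mem (mul_mem hK1 hj) (mul_mem (natCast_mem T (K + 1)) h))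
        (mul_mem hs (natCast_mem T (j + 1))) using 1
      push_cast
      ring
  refine mem_of_natCast_mul_mem hT K.succ_ne_zero (hdescent ((K + 1) * N) ?_)
  rw [Nat.cast_mul, ← mul_add, add_comm a]
  exact mul_mem (natCast_mem _ _) hN

variable {n m : ℕ} {g : Fin m → MvPolynomial (Fin n) ℝ}

/-- Where `w` vanishes the value is `ε`; elsewhere the point comes from one of `ℝ[X]`, at which
`h` is nonnegative by Artin–Lang. -/
lemma map_mul_add_algebraMap_pos {R : Type*} [Field R] [LinearOrder R] [IsStrictOrderedRing R]
    [PolynomialIVT R] {A : Subalgebra ℝ E} (φ : MvPolynomial (Fin n) ℝ →ₐ[ℝ] E)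
    (hg : ∀ i, φ (g i) ∈ T) {w : A} (hw : (w : E) ∈ T) (hX : ∀ i, φ (X i) * w ∈ A)
    {ψ : A →+* R} (hψ : ∀ b : A, (b : E) ∈ T → 0 ≤ ψ b) {h : MvPolynomial (Fin n) ℝ}
    (hh : ∀ x ∈ KS g, 0 ≤ eval x h) {l : ℕ} {b : A} (hb : (b : E) = φ h * w ^ l) {ε : ℝ}
    (hε : 0 < ε) : 0 < ψ (b * w + algebraMap ℝ A ε) := by
  have hψε : 0 < ψ (algebraMap ℝ A ε) := by
    rw [← Real.mul_self_sqrt hε.le, map_mul, map_mul]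
    exact mul_self_pos.2 ((map_ne_zero (ψ.comp (algebraMap ℝ A))).2 (Real.sqrt_pos.2 hε).ne')
  rw [map_add, map_mul]
  rcases eq_or_ne (ψ w) 0 with hw0 | hw0
  · rwa [hw0, mul_zero, zero_add]
  have hwpos : 0 < ψ w := (hψ w hw).lt_of_ne' hw0
  obtain ⟨θ, hθ⟩ := exists_ringHom_of_map_ne_zero (x := fun i => ⟨_, hX i⟩) (fun _ => rfl) hw0
  have hθg : ∀ i, 0 ≤ θ (g i) := fun i => by
    obtain ⟨j, hj⟩ := exists_map_mul_pow_mem φ w.2 hX (g i)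
    refine nonneg_of_mul_nonneg_left ?_ (pow_pos hwpos j)
    rw [← hθ (g i) j ⟨_, hj⟩ rfl]
    exact hψ _ (mul_mem (hg i) (pow_mem hw j))
  rw [hθ h l b hb]
  exact add_pos_of_nonneg_of_pos (mul_nonneg (mul_nonneg (map_nonneg_of_forall_mem_KS hθg hh)
    (pow_nonneg hwpos.le l)) hwpos.le) hψε

theorem exists_forall_add_smul_mem (hT : ∀ x, IsSquare x → x ∈ T)
    (φ : MvPolynomial (Fin n) ℝ →ₐ[ℝ] E) (hg : ∀ i, φ (g i) ∈ T) {p : MvPolynomial (Fin n) ℝ}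
    {k : ℕ} (hp1 : ∀ x ∈ KS g, 1 ≤ eval x p)
    (hgrow : ∀ x ∈ KS g, ∑ i, x i ^ 2 ≤ k * eval x p) {y : E} (hpy : φ p * y = 1)
    {h : MvPolynomial (Fin n) ℝ} (hh : ∀ x ∈ KS g, 0 ≤ eval x h) :
    ∃ z : E, ∀ ε : ℝ, 0 < ε → φ h + ε • z ∈ T := by
  obtain ⟨j, hwT, hwA, hX⟩ := exists_pow_mem_boundedSubalgebra (hT := hT) φ hg hp1 hgrow hpy
  set w := y ^ j
  set u := φ p ^ j
  have huw : u * w = 1 := by rw [← mul_pow, hpy, one_pow]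
  have huT : u ∈ T := by
    rw [show u = w * (u * u) by linear_combination (-u) * huw]
    exact mul_mem hwT (hT _ ⟨u, rfl⟩)
  obtain ⟨l, hl⟩ := exists_map_mul_pow_mem φ hwA hX h
  refine ⟨u ^ (l + 1), fun ε hε => ?_⟩
  set A := boundedSubalgebra T hT
  let a : A := ⟨_, hl⟩ * ⟨w, hwA⟩ + algebraMap ℝ A ε
  obtain ⟨s, hs, hsa⟩ := exists_mul_sub_one_mem (T := T.comap A.subtype) (f := a)
    (fun x hx => hT _ (hx.map A.subtype)) fun R _ _ _ _ ψ hψ =>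
      map_mul_add_algebraMap_pos φ hg hwT hX hψ hh rfl hε
  have haT : φ h * w ^ l * w + algebraMap ℝ E ε ∈ T := mem_of_mul_sub_one_mem a.2 hs s.2 hsa
  have huw' : u ^ (l + 1) * w ^ (l + 1) = 1 := by rw [← mul_pow, huw, one_pow]
  convert mul_mem haT (pow_mem huT (l + 1)) using 1
  rw [Algebra.smul_def]
  linear_combination (-φ h) * huw'

end Approximation

section CommonPoint

/-- The ordering of `ℝ[X]` in which `f` is nonnegative if `f ≥ 0` at `u`-almost every point. -/
def ultrafilterOrdering {σ : Type*} (u : Ultrafilter (σ → ℝ)) :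
    RingPreordering (MvPolynomial σ ℝ) where
  carrier := {f | ∀ᶠ x in u, 0 ≤ eval x f}
  zero_mem' := .of_forall fun x => (map_zero (eval x)).ge
  one_mem' := .of_forall fun x => by simp
  add_mem' hf hf' := (hf.and hf').mono fun x hx => by
    rw [map_add]
    exact add_nonneg hx.1 hx.2
  mul_mem' hf hf' := (hf.and hf').mono fun x hx => by
    rw [map_mul]
    exact mul_nonneg hx.1 hx.2
  mem_of_isSquare' := by
    rintro _ ⟨f, rfl⟩
    exact .of_forall fun x => by
      rw [map_mul]
      exact mul_self_nonneg _
  neg_one_notMem' h := by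
    obtain ⟨x, hx⟩ := h.exists
    rw [map_neg, map_one] at hx
    linarith

section UltrafilterOrdering

variable {σ : Type*} {u : Ultrafilter (σ → ℝ)}

instance : (ultrafilterOrdering u).IsOrdering :=
  RingPreordering.isOrdering_iff.2 fun f f' h => by
    refine Ultrafilter.eventually_or.1 (h.mono fun x hx => ?_)
    rw [map_neg, map_mul, Left.nonneg_neg_iff] at hx
    by_contra! hcon
    exact hx.not_gt (mul_pos_of_neg_of_neg hcon.1 hcon.2)

end UltrafilterOrdering

variable {n m : ℕ} {D : Submonoid (MvPolynomial (Fin n) ℝ)} {g : Fin m → MvPolynomial (Fin n) ℝ}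
  {q : MvPolynomial (Fin n) ℝ}

lemma exists_ultrafilter_of_forall_mem (hq : ∀ e ∈ D, ∃ x ∈ KS g, eval x e ≠ 0 ∧ eval x q < 0) :
    ∃ u : Ultrafilter (Fin n → ℝ), ∀ e ∈ D, ∀ᶠ x in u, x ∈ KS g ∧ eval x e ≠ 0 ∧ eval x q < 0 := by
  let W : D → Set (Fin n → ℝ) := fun e => {x | x ∈ KS g ∧ eval x e.1 ≠ 0 ∧ eval x q < 0}
  have hW : ∀ d d', W (d * d') ⊆ W d ∩ W d' := by
    rintro d d' x ⟨hx, hne, hneg⟩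
    rw [Submonoid.coe_mul, map_mul, mul_ne_zero_iff] at hne
    exact ⟨⟨hx, hne.1, hneg⟩, hx, hne.2, hneg⟩
  have hne : (⨅ e, Filter.principal (W e)).NeBot :=
    Filter.iInf_neBot_of_directed
      (fun d d' => ⟨d * d', Filter.principal_mono.2 ((hW d d').trans Set.inter_subset_left),
        Filter.principal_mono.2 ((hW d d').trans Set.inter_subset_right)⟩)
      fun d => Filter.principal_neBot_iff.2 (hq d d.2)
  refine ⟨Ultrafilter.of (⨅ e, Filter.principal (W e)), fun e he => ?_⟩
  have hWe : W ⟨e, he⟩ ∈ Ultrafilter.of (⨅ e, Filter.principal (W e)) :=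
    Ultrafilter.of_le _ (Filter.mem_iInf_of_mem ⟨e, he⟩ (Filter.mem_principal_self _))
  exact hWe

/-- An ultrafilter gives such a point for all of `D` at once, but over a real closed extension of
`ℝ`; Artin–Lang moves it to `ℝⁿ` for countably many denominators. -/
theorem exists_mem_KS_forall_eval_ne_zero
    (hq : ∀ e ∈ D, ∃ x ∈ KS g, eval x e ≠ 0 ∧ eval x q < 0) {e : ℕ → MvPolynomial (Fin n) ℝ}
    (he : ∀ j, e j ∈ D) : ∃ x ∈ KS g, eval x q < 0 ∧ ∀ j, eval x (e j) ≠ 0 := by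
  obtain ⟨u, hu⟩ := exists_ultrafilter_of_forall_mem hq
  obtain ⟨R, _, _, _, _, φ, hφ⟩ :=
    exists_polynomialIVT_ringHom_nonneg_iff (ultrafilterOrdering u)
  have hφg : ∀ i, 0 ≤ φ (g i) := fun i => (hφ _).2 ((hu 1 D.one_mem).mono fun x hx => hx.1 i)
  have hφq : φ q < 0 := by
    refine lt_of_not_ge fun h => ?_
    obtain ⟨x, hx, hx'⟩ := (((hφ q).1 h).and (hu 1 D.one_mem)).exists
    exact hx.not_gt hx'.2.2
  have hφe : ∀ j, φ (e j) ≠ 0 := by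
    intro j h
    have hneg : -e j ∈ ultrafilterOrdering u := (hφ _).1 (by rw [map_neg, h, neg_zero])
    obtain ⟨x, ⟨hx, hx'⟩, hne⟩ := ((((hφ (e j)).1 h.ge).and hneg).and (hu _ (he j))).exists
    rw [map_neg, Left.nonneg_neg_iff] at hx'
    exact hne.2.1 (hx'.antisymm hx)
  obtain ⟨x, hx, hsign, hxe⟩ := exists_mem_KS_sign_eval_eq hφg q hφe
  rw [sign_neg hφq] at hsign
  exact ⟨x, hx, sign_eq_neg_one_iff.1 hsign, hxe⟩

end CommonPoint

section PosE

variable {n : ℕ} {D : Submonoid (MvPolynomial (Fin n) ℝ)} {K : Set (Fin n → ℝ)}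

lemma mk_mem_posE_iff (hD0 : (0 : MvPolynomial (Fin n) ℝ) ∉ D) {f : MvPolynomial (Fin n) ℝ}
    {d : D} : Localization.mk f d ∈ PosE D K ↔
      ∃ e ∈ D, ∀ x ∈ K, eval x e ≠ 0 → 0 ≤ eval x (f * d) := by
  constructor
  · rintro ⟨f', d', h, hpos⟩
    obtain ⟨c, hc⟩ := Localization.r_iff_exists.1 (Localization.mk_eq_mk_iff.1 h)
    have hff' : d' * f = d * f' := mul_left_cancel₀ (ne_of_mem_of_not_mem c.2 hD0) hc
    refine ⟨d', d'.2, fun x hx hne => ?_⟩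
    have hx' : eval x (f * d) * eval x d' ^ 2 = eval x f' * eval x d' * eval x d ^ 2 := by
      have := congrArg (eval x) hff'
      simp only [map_mul] at this ⊢
      linear_combination eval x d * eval x d' * this
    refine nonneg_of_mul_nonneg_left ?_ (sq_pos_of_ne_zero hne)
    rw [hx']
    exact mul_nonneg (hpos x hx) (sq_nonneg _)
  · rintro ⟨e, he, hpos⟩
    refine ⟨f * (e * e), d * (⟨e, he⟩ * ⟨e, he⟩), ?_, fun x hx => ?_⟩
    · refine Localization.mk_eq_mk_iff.2 (Localization.r_iff_exists.2 ⟨1, ?_⟩)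
      simp only [Submonoid.coe_mul, Submonoid.coe_one]
      ring
    · rcases eq_or_ne (eval x e) 0 with h0 | h0
      · simp [h0]
      · refine (mul_nonneg (hpos x hx h0) (sq_nonneg (eval x e ^ 2))).trans_eq ?_
        simp only [Submonoid.coe_mul, map_mul]
        ring

/-- `PosE D K` as a subsemiring. -/
def posSemiring (D : Submonoid (MvPolynomial (Fin n) ℝ)) (K : Set (Fin n → ℝ)) :
    Subsemiring (Localization D) where
  carrier := PosE D K
  zero_mem' := ⟨0, 1, (Localization.mk_zero 1).symm, by simp⟩
  one_mem' := ⟨1, 1, Localization.mk_one.symm, by simp⟩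
  add_mem' := by
    rintro _ _ ⟨f, d, rfl, h⟩ ⟨f', d', rfl, h'⟩
    refine ⟨_, _, Localization.add_mk _ _ _ _, fun x hx => ?_⟩
    refine (add_nonneg (mul_nonneg (h x hx) (sq_nonneg (eval x d')))
      (mul_nonneg (h' x hx) (sq_nonneg (eval x d)))).trans_eq ?_
    simp only [Submonoid.coe_mul, map_add, map_mul]
    ring
  mul_mem' := by
    rintro _ _ ⟨f, d, rfl, h⟩ ⟨f', d', rfl, h'⟩
    refine ⟨_, _, Localization.mk_mul _ _ _ _, fun x hx => ?_⟩
    refine (mul_nonneg (h x hx) (h' x hx)).trans_eq ?_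
    simp only [Submonoid.coe_mul, map_mul]
    ring

lemma isSquare_mem_posSemiring (r : Localization D) (hr : IsSquare r) : r ∈ posSemiring D K := by
  obtain ⟨r, rfl⟩ := hr
  induction r using Localization.induction_on with
  | H fd =>
    refine ⟨_, _, Localization.mk_mul _ _ _ _, fun x _ => ?_⟩
    rw [Submonoid.coe_mul, map_mul, map_mul]
    exact mul_nonneg (mul_self_nonneg _) (mul_self_nonneg _)

lemma genPreordering_subset_posE {m : ℕ} (g : Fin m → MvPolynomial (Fin n) ℝ) :
    (genPreordering fun i => algebraMap (MvPolynomial (Fin n) ℝ) (Localization D) (g i)) ⊆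
      PosE D (KS g) :=
  preord_le (T := posSemiring D (KS g)) isSquare_mem_posSemiring fun i =>
    ⟨g i, 1, (Localization.mk_one_eq_algebraMap _).symm, fun x hx => by simpa using hx i⟩

/-- Each term of a convergent sequence of coefficient vectors has its own exceptional denominator
`e j`; at a point where none of them vanishes the inequality passes to the limit. -/
lemma isClosed_setOf_mk_sum_mem_posE (hD0 : (0 : MvPolynomial (Fin n) ℝ) ∉ D) {m : ℕ}
    {g : Fin m → MvPolynomial (Fin n) ℝ} {ι : Type*} [Fintype ι]
    (f : ι → MvPolynomial (Fin n) ℝ) (d : D) :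
    IsClosed {c : ι → ℝ | Localization.mk (∑ i, c i • f i) d ∈ PosE D (KS g)} := by
  refine IsSeqClosed.isClosed fun c c₀ hc hlim => ?_
  by_contra hcon
  rw [Set.mem_ofPred_eq, mk_mem_posE_iff hD0] at hcon
  choose e heD he using fun j => (mk_mem_posE_iff hD0).1 (hc j)
  push Not at hcon
  obtain ⟨x, hx, hneg, hne⟩ := exists_mem_KS_forall_eval_ne_zero hcon heD
  have heval : ∀ c : ι → ℝ, eval x ((∑ i, c i • f i) * d) =
      (∑ i, c i * eval x (f i)) * eval x d := fun c => by
    simp only [map_mul, map_sum, smul_eval]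
  have hcont : Continuous fun c : ι → ℝ => eval x ((∑ i, c i • f i) * d) := by
    simp only [heval]
    fun_prop
  exact hneg.not_ge (ge_of_tendsto' ((hcont.tendsto c₀).comp hlim) fun j => he j x hx (hne j))

end PosE

section FinitelyOpen

/-- Closedness is tested on the coefficient vectors of linear combinations. -/
lemma isClosed_finTop {E : Type*} [AddCommGroup E] [Module ℝ E] {S : Set E}
    (h : ∀ (r : ℕ) (v : Fin r → E), IsClosed {c : Fin r → ℝ | ∑ i, c i • v i ∈ S}) :
    @IsClosed _ (finTop E) S := by
  let _ : TopologicalSpace E := finTop E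
  rw [← isOpen_compl_iff]
  intro U hU
  let _ : TopologicalSpace U := weakTop U
  let b := Module.finBasis ℝ U
  have hcont : Continuous b.equivFun :=
    continuous_pi fun i => continuous_iInf_dom (i := b.coord i) continuous_induced_dom
  have hset : (Subtype.val : U → E) ⁻¹' Sᶜ =
      b.equivFun ⁻¹' {c | ∑ i, c i • (b i : E) ∈ S}ᶜ := by
    ext u
    have hu : ∑ i, b.equivFun u i • (b i : E) = u := by
      simpa only [map_sum, map_smul] using! congrArg U.subtype (b.sum_equivFun u)
    rw [Set.mem_preimage, Set.mem_preimage, Set.mem_compl_iff, Set.mem_compl_iff,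
      Set.mem_ofPred_eq, hu]
  rw [hset]
  exact (h _ _).isOpen_compl.preimage hcont

lemma mem_closure_finTop {E : Type*} [AddCommGroup E] [Module ℝ E] {S : Set E} {x z : E}
    (h : ∀ ε : ℝ, 0 < ε → x + ε • z ∈ S) : x ∈ @closure _ (finTop E) S := by
  let _ : TopologicalSpace E := finTop E
  have hcont : Continuous fun ε : ℝ => x + ε • z := by
    refine continuous_def.2 fun O hO => ?_
    let U : Submodule ℝ E := Submodule.span ℝ {x, z}
    let _ : TopologicalSpace U := weakTop U
    let x' : U := ⟨x, Submodule.subset_span (by simp)⟩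
    let z' : U := ⟨z, Submodule.subset_span (by simp)⟩
    have hline : Continuous fun ε : ℝ => x' + ε • z' := by
      refine continuous_iInf_rng.2 fun L => continuous_induced_rng.2 ?_
      simp only [Function.comp_def, map_add, map_smul]
      fun_prop
    exact (hO U (FiniteDimensional.span_of_finite ℝ (by simp))).preimage hline
  have hlim : Filter.Tendsto (fun ε : ℝ => x + ε • z) (nhdsWithin 0 (Set.Ioi 0)) (nhds x) := by
    simpa using (hcont.tendsto 0).mono_left nhdsWithin_le_nhds
  exact mem_closure_of_tendsto hlim (eventually_mem_nhdsWithin.mono h)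

variable {n m : ℕ} {D : Submonoid (MvPolynomial (Fin n) ℝ)} {g : Fin m → MvPolynomial (Fin n) ℝ}

theorem isClosed_posE (hD0 : (0 : MvPolynomial (Fin n) ℝ) ∉ D) :
    @IsClosed _ (finTop (Localization D)) (PosE D (KS g)) := by
  refine isClosed_finTop fun r v => ?_
  obtain ⟨d, hd⟩ := IsLocalization.exist_integer_multiples_of_finite D v
  choose f hf using hd
  have hrep : ∀ c : Fin r → ℝ, ∑ i, c i • v i = Localization.mk (∑ i, c i • f i) d := by
    intro c
    rw [Localization.mk_eq_mk', IsLocalization.eq_mk'_iff_mul_eq, Finset.sum_mul, map_sum]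
    refine Finset.sum_congr rfl fun i _ => ?_
    rw [smul_mul_assoc, mul_comm, ← Algebra.smul_def]
    exact (congrArg (c i • ·) (hf i).symm).trans
      (map_smul (IsScalarTower.toAlgHom ℝ _ (Localization D)) (c i) (f i)).symm
  simp only [hrep]
  exact isClosed_setOf_mk_sum_mem_posE hD0 f d

/-- `f / d = (1 / d)² f d`, and the polynomial `f d` is nonnegative on `KS g`. -/
theorem posE_subset_closure {p : MvPolynomial (Fin n) ℝ} (hpD : p ∈ D) {k : ℕ}
    (hp1 : ∀ x ∈ KS g, 1 ≤ eval x p) (hgrow : ∀ x ∈ KS g, ∑ i, x i ^ 2 ≤ k * eval x p) :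
    PosE D (KS g) ⊆ @closure _ (finTop (Localization D))
      (genPreordering fun i => algebraMap (MvPolynomial (Fin n) ℝ) (Localization D) (g i)) := by
  rintro _ ⟨f, d, rfl, hfd⟩
  let φ : MvPolynomial (Fin n) ℝ →ₐ[ℝ] Localization D := IsScalarTower.toAlgHom ℝ _ _
  obtain ⟨z, hz⟩ := exists_forall_add_smul_mem (E := Localization D) isSquare_mem_preord φ
    gen_mem_preord hp1 hgrow
    ((IsLocalization.mk'_spec' (Localization D) 1 ⟨p, hpD⟩).trans (map_one _))
    (h := f * d) fun x hx => by
      rw [map_mul]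
      exact hfd x hx
  let s : Localization D := Localization.mk 1 d
  have hs : s * s * φ (f * d) = Localization.mk f d := by
    change s * s * algebraMap _ _ (f * d) = _
    rw [← Localization.mk_one_eq_algebraMap, Localization.mk_mul, Localization.mk_mul]
    refine Localization.mk_eq_mk_iff.2 (Localization.r_iff_exists.2 ⟨1, ?_⟩)
    simp only [Submonoid.coe_mul, Submonoid.coe_one]
    ring
  refine mem_closure_finTop (z := s * s * z) fun ε hε => ?_
  rw [← hs, ← mul_smul_comm, ← mul_add]
  exact (preord _).mul_mem (isSquare_mem_preord _ ⟨s, rfl⟩) (hz ε hε)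

end FinitelyOpen

end RealAlgebra

/-- The closure of `T_S^E` in the topology of finitely open sets
equals `Pos^E(K_S)`. -/
theorem finTop_closure_preordering_eq_pos
    {n m : ℕ} (D : Submonoid (MvPolynomial (Fin n) ℝ))
    (hD0 : (0 : MvPolynomial (Fin n) ℝ) ∉ D)
    (g : Fin m → MvPolynomial (Fin n) ℝ)
    (hKne : (KS g).Nonempty)
    (p : MvPolynomial (Fin n) ℝ) (hpD : p ∈ D)
    (k : ℕ) (hk : 1 ≤ k)
    (hp1 : ∀ x ∈ KS g, 1 ≤ eval x p)
    (hpgrow : ∀ x ∈ KS g, ∑ i, (x i) ^ 2 ≤ (k : ℝ) * eval x p) :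
    @closure _ (finTop (Localization D))
        (genPreordering fun i =>
          algebraMap (MvPolynomial (Fin n) ℝ) (Localization D) (g i))
      = PosE D (KS g) := by
  refine Set.Subset.antisymm ?_ (RealAlgebra.posE_subset_closure hpD hp1 hpgrow)
  let _ : TopologicalSpace (Localization D) := finTop (Localization D)
  exact closure_minimal (RealAlgebra.genPreordering_subset_posE g) (RealAlgebra.isClosed_posE hD0)

end
end

section
/- (Rational Haviland's Theorem.) Let A be a commutative unital ℝ-algebra, D ⊆ A a multiplicatively closed subset with 1 ∈ D, 𝒳 a nonempty Hausdorff topological space, and ^ : A → C(𝒳,ℝ) an ℝ-algebra homomorphism into the algebra of continuous real-valued functions on 𝒳. Assume: (1) there exists q ∈ A with q̂ ≥ 0 on 𝒳 such that 𝒳_k = {x ∈ 𝒳 : q̂(x) ≤ k} is compact for every integer k ≥ 1; (2) for every d ∈ D the zero set Z(d̂) = {x ∈ 𝒳 : d̂(x) = 0} has empty interior; (3) every open subset of 𝒳 is σ-compact (a countable union of compact sets). Then for every linear functional L : D⁻¹A → ℝ satisfying 'for all a ∈ A and d ∈ D, if â·d̂ ≥ 0 on 𝒳 then L(a/d) ≥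 0', there exists a positive Borel measure μ on 𝒳 such that μ(Z(d̂)) = 0 for every d ∈ D and L(a/d) = ∫_𝒳 â(x)/d̂(x) dμ(x) for all a ∈ A and d ∈ D (the integrand being defined μ-almost everywhere). -/
open MeasureTheory

/-!
By M. Riesz' extension theorem, `L` extends to a functional on `D⁻¹A × C_c(X)` that is nonnegative
on every pair `(a/d, f)` with `â/d̂ + f ≥ 0` off `Z(d̂)`; it exists because constants dominate
`C_c(X)`. By the Riesz–Markov–Kakutani theorem its restriction to `C_c(X)` is integration against
a measure `μ`, `X` being locally compact because `q̂` is proper.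

A fraction `p/d²` with `p̂ ≥ 0` is approximated from below by the compactly supported functions
`f_ε = p̂ · max(0, 1 - ε q̂²) / (d̂² + ε)`. As `0 ≤ p̂/d̂² - f_ε ≤ ε (p̂/d̂⁴ + p̂ q̂²/d̂²)`, joint
positivity gives `∫ f_ε dμ → L(p/d²)`, while monotone convergence gives `∫ f_ε dμ → ∫ p̂/d̂² dμ` in
`[0, ∞]`. For `p = 1` the limit of `f_ε` is infinite on `Z(d̂)`, which is therefore null. An
arbitrary fraction is a combination of two such ones, since `4 a/d = (a + d)²/d² - (a - d)²/d²`.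
-/

open Filter Topology CompactlySupported

namespace RationalHaviland

lemma four_smul_mk_eq_sub_sq {R A : Type*} [CommSemiring R] [CommRing A] [Algebra R A]
    {D : Submonoid A} (a : A) (d : D) :
    (4 : R) • Localization.mk a d =
      Localization.mk ((a + d) ^ 2) (d ^ 2) - Localization.mk ((a - d) ^ 2) (d ^ 2) := by
  rw [sub_eq_add_neg, Localization.neg_mk, Localization.add_mk_self, Localization.smul_mk,
    Localization.mk_eq_mk_iff, Localization.r_iff_exists]
  exact ⟨1, by push_cast; rw [Algebra.smul_def, map_ofNat]; ring⟩

lemma div_eq_sub_sq_div_sq {K : Type*} [Field K] [NeZero (4 : K)] (a d : K) :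
    a / d = ((a + d) ^ 2 / d ^ 2 - (a - d) ^ 2 / d ^ 2) / 4 := by
  rcases eq_or_ne d 0 with rfl | hd
  · simp
  · have := NeZero.ne (4 : K)
    field_simp
    ring

lemma isProperMap_of_isCompact_le {X : Type*} [TopologicalSpace X] {q : X → ℝ} (hq : Continuous q)
    (hqc : ∀ᶠ k : ℕ in atTop, IsCompact {x | q x ≤ k}) : IsProperMap q := by
  refine isProperMap_iff_isCompact_preimage.mpr ⟨hq, fun K hK => ?_⟩
  obtain ⟨M, hM⟩ := hK.bddAbove
  obtain ⟨k, hk, hMk⟩ :=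
    (hqc.and (tendsto_natCast_atTop_atTop.eventually_ge_atTop M)).exists
  exact hk.of_isClosed_subset (hK.isClosed.preimage hq) fun x hx => (hM hx).trans hMk

lemma locallyCompactSpace_of_isProperMap {X Y : Type*} [TopologicalSpace X] [R1Space X]
    [TopologicalSpace Y] [WeaklyLocallyCompactSpace Y] {q : X → Y} (hq : IsProperMap q) :
    LocallyCompactSpace X := by
  have : WeaklyLocallyCompactSpace X := ⟨fun x => by
    obtain ⟨K, hK, hKx⟩ := exists_compact_mem_nhds (q x)
    exact ⟨q ⁻¹' K, hq.isCompact_preimage hK, hq.continuous.continuousAt hKx⟩⟩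
  infer_instance

section Extension

variable {A : Type*} [CommRing A] [Algebra ℝ A] {D : Submonoid A}
  {X : Type*} [TopologicalSpace X] (φ : A →ₐ[ℝ] C(X, ℝ))

variable (D) in
/-- The cone of pairs `(b, f)` that are nonnegative as functions off the zeros of a denominator `d`
of some representation `b = a/d`. It is the positivity for which `L` is extended to the product. -/
def positiveCone : PointedCone ℝ (Localization D × C_c(X, ℝ)) where
  carrier := {y | ∃ (a : A) (d : D), y.1 = Localization.mk a d ∧
    ∀ x, φ d x ≠ 0 → 0 ≤ φ a x / φ d x + y.2 x}
  zero_mem' := ⟨0, 1, by simp [Localization.mk_zero], by simp⟩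
  add_mem' := by
    rintro ⟨_, f⟩ ⟨_, g⟩ ⟨a, d, rfl, hf⟩ ⟨b, e, rfl, hg⟩
    refine ⟨d * b + e * a, d * e, Localization.add_mk .., fun x hx => ?_⟩
    simp only [Submonoid.coe_mul, map_mul, ContinuousMap.mul_apply, mul_ne_zero_iff] at hx
    obtain ⟨hd, he⟩ := hx
    refine (add_nonneg (hf x hd) (hg x he)).trans_eq ?_
    simp only [Submonoid.coe_mul, map_mul, map_add, ContinuousMap.mul_apply,
      ContinuousMap.add_apply, Prod.mk_add_mk, CompactlySupportedContinuousMap.add_apply]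
    field_simp
    ring
  smul_mem' := by
    rintro ⟨c, hc⟩ ⟨_, f⟩ ⟨a, d, rfl, hf⟩
    refine ⟨c • a, d, Localization.smul_mk .., fun x hx => ?_⟩
    refine (mul_nonneg hc (hf x hx)).trans_eq ?_
    change c * (φ a x / φ d x + f x) = φ (c • a) x / φ d x + c * f x
    rw [map_smul, ContinuousMap.smul_apply, smul_eq_mul]
    ring

theorem exists_const_add_mem_positiveCone (f : C_c(X, ℝ)) :
    ∃ M : ℝ, (algebraMap ℝ (Localization D) M, f) ∈ positiveCone D φ := by
  obtain ⟨M, hM⟩ := f.hasCompactSupport.exists_bound_of_continuous f.continuous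
  refine ⟨M, algebraMap ℝ A M, 1, (Localization.mk_algebraMap M).symm, fun x _ => ?_⟩
  simpa using neg_le_iff_add_nonneg'.mp (neg_le_of_abs_le (hM x))

theorem exists_positive_extension {L : Localization D →ₗ[ℝ] ℝ}
    (hL : ∀ (a : A) (d : D), (∀ x, 0 ≤ φ a x * φ (d : A) x) → 0 ≤ L (Localization.mk a d)) :
    ∃ Λ : C_c(X, ℝ) →ₚ[ℝ] ℝ, ∀ b f, (b, f) ∈ positiveCone D φ → 0 ≤ L b + Λ f := by
  let F : (Localization D × C_c(X, ℝ)) →ₗ.[ℝ] ℝ :=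
    ⟨Submodule.prod ⊤ ⊥, L ∘ₗ LinearMap.fst ℝ _ _ ∘ₗ Submodule.subtype _⟩
  have hF_nonneg : ∀ y : F.domain, y.1 ∈ positiveCone D φ → 0 ≤ F y := by
    rintro ⟨⟨b, f⟩, hbf⟩ ⟨a, d, rfl, h⟩
    obtain rfl : f = 0 := by simpa using hbf.2
    refine hL a d fun x => ?_
    rcases eq_or_ne (φ d x) 0 with hx | hx
    · simp [hx]
    · simpa [div_nonneg_iff, mul_nonneg_iff] using h x hx
  have hF_cofinal : ∀ y, ∃ z : F.domain, z.1 + y ∈ positiveCone D φ := by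
    rintro ⟨b, f⟩
    obtain ⟨M, hM⟩ := exists_const_add_mem_positiveCone (D := D) φ f
    exact ⟨⟨(algebraMap ℝ _ M - b, 0), by simp [F]⟩, by simpa using hM⟩
  obtain ⟨G, hGF, hG⟩ := riesz_extension (positiveCone D φ) F hF_nonneg hF_cofinal
  refine ⟨.mk₀ (G ∘ₗ LinearMap.inr ℝ _ _) fun f hf => hG (0, f) ?_, fun b f hbf => ?_⟩
  · exact ⟨0, 1, by simp [Localization.mk_zero], fun x _ => by simpa using hf x⟩
  · have hGL : G (b, 0) = L b := hGF ⟨(b, 0), by simp [F]⟩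
    calc 0 ≤ G (b, f) := hG _ hbf
      _ = L b + G (0, f) := by rw [← hGL, ← map_add, Prod.mk_add_mk, add_zero, zero_add]

end Extension

section Truncation

/-- The truncation at level `ε > 0` of the fraction `p / s ^ 2`, as a function of the values `p`,
`s`, `q` of the numerator, of the root of the denominator and of a proper function. As `ε`
decreases to `0` it increases to the fraction. -/
noncomputable def trunc (ε p s q : ℝ) : ℝ :=
  p * max 0 (1 - ε * q ^ 2) / (s ^ 2 + ε)

variable {ε δ p s q : ℝ}

lemma trunc_nonneg (hε : 0 ≤ ε) (hp : 0 ≤ p) : 0 ≤ trunc ε p s q := by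
  unfold trunc
  positivity

lemma trunc_anti (hε : 0 < ε) (hεδ : ε ≤ δ) (hp : 0 ≤ p) : trunc δ p s q ≤ trunc ε p s q := by
  unfold trunc
  gcongr

lemma trunc_le_div (hε : 0 ≤ ε) (hp : 0 ≤ p) (hs : s ≠ 0) : trunc ε p s q ≤ p / s ^ 2 := by
  have hcut : max 0 (1 - ε * q ^ 2) ≤ 1 := max_le zero_le_one (by nlinarith [sq_nonneg q])
  unfold trunc
  gcongr
  · exact mul_le_of_le_one_right hp hcut
  · linarith

lemma div_le_trunc_add (hε : 0 ≤ ε) (hp : 0 ≤ p) (hs : s ≠ 0) :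
    p / s ^ 2 ≤ trunc ε p s q + ε * ((p + p * q ^ 2 * s ^ 2) / s ^ 4) := by
  have hcut : p * (1 - ε * q ^ 2) / (s ^ 2 + ε) ≤ trunc ε p s q := by
    unfold trunc
    gcongr
    exact le_max_right _ _
  refine le_trans ?_ (add_le_add_left hcut _)
  have hgap : p * (1 - ε * q ^ 2) / (s ^ 2 + ε) + ε * ((p + p * q ^ 2 * s ^ 2) / s ^ 4) - p / s ^ 2
      = p * ε ^ 2 * (1 + q ^ 2 * s ^ 2) / (s ^ 4 * (s ^ 2 + ε)) := by
    have : s ^ 2 + ε ≠ 0 := by positivity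
    field_simp
    ring
  rw [← sub_nonneg, hgap]
  positivity

lemma tendsto_ofReal_trunc (p s q : ℝ) :
    Tendsto (fun ε => ENNReal.ofReal (trunc ε p s q)) (𝓝[>] 0)
      (𝓝 (ENNReal.ofReal p / ENNReal.ofReal (s ^ 2))) := by
  have hnum : Tendsto (fun ε => ENNReal.ofReal (max 0 (1 - ε * q ^ 2))) (𝓝[>] 0) (𝓝 1) := by
    have : Continuous fun ε => ENNReal.ofReal (max 0 (1 - ε * q ^ 2)) :=
      ENNReal.continuous_ofReal.comp (by fun_prop)
    simpa using (this.tendsto 0).mono_left nhdsWithin_le_nhds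
  have hden : Tendsto (fun ε => (ENNReal.ofReal (s ^ 2 + ε))⁻¹) (𝓝[>] 0)
      (𝓝 (ENNReal.ofReal (s ^ 2))⁻¹) := by
    have : Continuous fun ε => (ENNReal.ofReal (s ^ 2 + ε))⁻¹ :=
      (ENNReal.continuous_ofReal.comp (by fun_prop)).inv
    simpa using (this.tendsto 0).mono_left nhdsWithin_le_nhds
  have hprod := ENNReal.Tendsto.const_mul (a := ENNReal.ofReal p)
    (ENNReal.Tendsto.mul hnum (.inl one_ne_zero) hden (.inr ENNReal.one_ne_top))
    (.inr ENNReal.ofReal_ne_top)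
  rw [one_mul, ← div_eq_mul_inv] at hprod
  refine hprod.congr' ?_
  filter_upwards [self_mem_nhdsWithin] with ε (hε : 0 < ε)
  rw [trunc, ENNReal.ofReal_div_of_pos (by positivity),
    ENNReal.ofReal_mul' (le_max_left _ _), div_eq_mul_inv, mul_assoc]

lemma tendsto_lintegral_trunc {X : Type*} [MeasurableSpace X] (μ : Measure X) {p s q : X → ℝ}
    (hp : Measurable p) (hs : Measurable s) (hq : Measurable q) (hp0 : ∀ x, 0 ≤ p x) :
    Tendsto (fun n : ℕ => ∫⁻ x, ENNReal.ofReal (trunc (1 / (n + 1)) (p x) (s x) (q x)) ∂μ) atTop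
      (𝓝 (∫⁻ x, ENNReal.ofReal (p x) / ENNReal.ofReal (s x ^ 2) ∂μ)) := by
  refine lintegral_tendsto_of_tendsto_of_monotone
    (fun n => Measurable.aemeasurable (by unfold trunc; fun_prop)) (ae_of_all _ fun x m n hmn => ?_)
    (ae_of_all _ fun x => ?_)
  · exact ENNReal.ofReal_le_ofReal
      (trunc_anti Nat.one_div_pos_of_nat (Nat.one_div_le_one_div hmn) (hp0 x))
  · exact (tendsto_ofReal_trunc _ _ _).comp (tendsto_nhdsWithin_iff.mpr
      ⟨tendsto_one_div_add_atTop_nhds_zero_nat,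
        .of_forall fun n => Set.mem_Ioi.mpr Nat.one_div_pos_of_nat⟩)

variable {X : Type*} [TopologicalSpace X]

/-- The function `trunc ε p s q` for continuous `p`, `s` and proper `q`. Properness of `q` makes its
support compact. -/
noncomputable def truncation (p s q : C(X, ℝ)) (hq : IsProperMap q) (ε : ℝ) (hε : 0 < ε) :
    C_c(X, ℝ) where
  toFun x := trunc ε (p x) (s x) (q x)
  continuous_toFun := by
    unfold trunc
    exact .div (by fun_prop) (by fun_prop) fun x => by positivity
  hasCompactSupport' := by
    refine .intro' (hq.isCompact_preimage (isCompact_closedBall 0 √(1 / ε)))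
      (Metric.isClosed_closedBall.preimage q.continuous) fun x hx => ?_
    have hdist : √(1 / ε) < |q x| := by simpa using hx
    have hlarge : 1 < ε * q x ^ 2 := by
      rw [← sq_abs]
      exact (div_lt_iff₀' hε).mp (Real.lt_sq_of_sqrt_lt hdist)
    simp [trunc, max_eq_left (sub_nonpos.mpr hlarge.le)]

@[simp]
lemma truncation_apply (p s q : C(X, ℝ)) (hq : IsProperMap q) (hε : 0 < ε) (x : X) :
    truncation p s q hq ε hε x = trunc ε (p x) (s x) (q x) := rfl

end Truncation

section JointPositivity

variable {A : Type*} [CommRing A] [Algebra ℝ A] {D : Submonoid A}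
  {X : Type*} [TopologicalSpace X] [MeasurableSpace X]
  {φ : A →ₐ[ℝ] C(X, ℝ)} {L : Localization D →ₗ[ℝ] ℝ} {μ : Measure X}

variable (φ L μ) in
/-- `L` and integration against `μ` are jointly positive: `L(a/d) + ∫ f dμ ≥ 0` whenever the
function `â/d̂ + f`, with `f ∈ C_c(X)`, is nonnegative off `Z(d̂)`. This compares `L` with integrals
of compactly supported functions. -/
def IsJointlyPositive : Prop :=
  ∀ (a : A) (d : D) (f : C_c(X, ℝ)), (∀ x, φ d x ≠ 0 → 0 ≤ φ a x / φ d x + f x) →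
    0 ≤ L (Localization.mk a d) + ∫ x, f x ∂μ

theorem exists_regular_isJointlyPositive [T2Space X] [LocallyCompactSpace X] [BorelSpace X]
    (hL : ∀ (a : A) (d : D), (∀ x, 0 ≤ φ a x * φ (d : A) x) → 0 ≤ L (Localization.mk a d)) :
    ∃ μ : Measure X, μ.Regular ∧ IsJointlyPositive φ L μ := by
  obtain ⟨Λ, hΛ⟩ := exists_positive_extension φ hL
  refine ⟨RealRMK.rieszMeasure Λ, inferInstance, fun a d f h => ?_⟩
  rw [RealRMK.integral_rieszMeasure]
  exact hΛ _ f ⟨a, d, rfl, h⟩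

namespace IsJointlyPositive

variable {p q : A} {d : D} {ε : ℝ}

lemma integral_truncation_le (h : IsJointlyPositive φ L μ) (hq : IsProperMap (φ q))
    (hp : ∀ x, 0 ≤ φ p x) (hε : 0 < ε) :
    ∫ x, truncation (φ p) (φ d) (φ q) hq ε hε x ∂μ ≤ L (Localization.mk p (d ^ 2)) := by
  have key := h p (d ^ 2) (-truncation (φ p) (φ d) (φ q) hq ε hε) fun x hx => by
    rw [SubmonoidClass.coe_pow, map_pow, ContinuousMap.pow_apply] at hx ⊢
    simpa [← sub_eq_add_neg] using trunc_le_div hε.le (hp x) (pow_ne_zero_iff two_ne_zero |>.mp hx)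
  simp only [CompactlySupportedContinuousMap.neg_apply, integral_neg] at key
  linarith

lemma le_integral_truncation (h : IsJointlyPositive φ L μ) (hq : IsProperMap (φ q))
    (hp : ∀ x, 0 ≤ φ p x) (hε : 0 < ε) :
    L (Localization.mk p (d ^ 2)) - ε * L (Localization.mk (p + p * q ^ 2 * d ^ 2) (d ^ 4)) ≤
      ∫ x, truncation (φ p) (φ d) (φ q) hq ε hε x ∂μ := by
  have hfrac : Localization.mk p (d ^ 2) = Localization.mk (p * d ^ 2) (d ^ 4) := by
    rw [Localization.mk_eq_mk_iff, Localization.r_iff_exists]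
    exact ⟨1, by push_cast; ring⟩
  have key := h (ε • (p + p * q ^ 2 * d ^ 2) + -(p * d ^ 2)) (d ^ 4)
    (truncation (φ p) (φ d) (φ q) hq ε hε) fun x hx => by
      simp only [SubmonoidClass.coe_pow, map_pow, ContinuousMap.pow_apply, map_add, map_neg,
        map_smul, map_mul, ContinuousMap.add_apply, ContinuousMap.neg_apply,
        ContinuousMap.smul_apply, ContinuousMap.mul_apply, smul_eq_mul] at hx ⊢
      have hd : φ d x ≠ 0 := pow_ne_zero_iff four_ne_zero |>.mp hx
      refine (sub_nonneg.mpr (div_le_trunc_add (q := φ q x) hε.le (hp x) hd)).trans_eq ?_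
      rw [truncation_apply]
      field_simp
      ring
  rw [← Localization.add_mk_self, ← Localization.neg_mk, ← Localization.smul_mk, ← hfrac, map_add,
    map_neg, map_smul, smul_eq_mul] at key
  linarith

lemma tendsto_integral_truncation (h : IsJointlyPositive φ L μ) (hq : IsProperMap (φ q))
    (hp : ∀ x, 0 ≤ φ p x) :
    Tendsto (fun n : ℕ =>
        ∫ x, truncation (φ p) (φ d) (φ q) hq (1 / (n + 1)) Nat.one_div_pos_of_nat x ∂μ) atTop
      (𝓝 (L (Localization.mk p (d ^ 2)))) := by
  refine tendsto_of_tendsto_of_tendsto_of_le_of_le ?_ tendsto_const_nhds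
    (fun n => h.le_integral_truncation hq hp Nat.one_div_pos_of_nat)
    (fun n => h.integral_truncation_le hq hp Nat.one_div_pos_of_nat)
  simpa using tendsto_const_nhds.sub
    ((tendsto_one_div_add_atTop_nhds_zero_nat (𝕜 := ℝ)).mul_const _)

variable [BorelSpace X] [IsFiniteMeasureOnCompacts μ]

theorem lintegral_div_sq (h : IsJointlyPositive φ L μ) (hq : IsProperMap (φ q))
    (hp : ∀ x, 0 ≤ φ p x) :
    ∫⁻ x, ENNReal.ofReal (φ p x) / ENNReal.ofReal (φ d x ^ 2) ∂μ =
      ENNReal.ofReal (L (Localization.mk p (d ^ 2))) := by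
  refine tendsto_nhds_unique (tendsto_lintegral_trunc μ (φ p).measurable (φ d).measurable
    (φ q).measurable hp) ?_
  refine (ENNReal.tendsto_ofReal (h.tendsto_integral_truncation hq hp)).congr fun n => ?_
  exact ofReal_integral_eq_lintegral_ofReal (CompactlySupportedContinuousMap.integrable _)
    (ae_of_all _ fun x => trunc_nonneg Nat.one_div_pos_of_nat.le (hp x))

theorem ae_ne_zero (h : IsJointlyPositive φ L μ) (hq : IsProperMap (φ q)) (d : D) :
    ∀ᵐ x ∂μ, φ d x ≠ 0 := by
  have hfin := h.lintegral_div_sq (p := 1) (d := d) hq fun x => by simp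
  have hmeas : Measurable fun x => ENNReal.ofReal (φ 1 x) / ENNReal.ofReal (φ d x ^ 2) := by
    have := (φ d).measurable
    have := (φ 1).measurable
    fun_prop
  filter_upwards [ae_lt_top hmeas (hfin.trans_ne ENNReal.ofReal_ne_top)] with x hx hx0
  simp [hx0] at hx

theorem integral_div_sq (h : IsJointlyPositive φ L μ) (hq : IsProperMap (φ q))
    (hp : ∀ x, 0 ≤ φ p x) :
    Integrable (fun x => φ p x / φ d x ^ 2) μ ∧
      ∫ x, φ p x / φ d x ^ 2 ∂μ = L (Localization.mk p (d ^ 2)) := by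
  have hnonneg : ∀ x, 0 ≤ φ p x / φ d x ^ 2 := fun x => div_nonneg (hp x) (sq_nonneg _)
  have hmeas : AEStronglyMeasurable (fun x => φ p x / φ d x ^ 2) μ :=
    ((φ p).measurable.div ((φ d).measurable.pow_const 2)).aestronglyMeasurable
  have hlint : ∫⁻ x, ENNReal.ofReal (φ p x / φ d x ^ 2) ∂μ =
      ENNReal.ofReal (L (Localization.mk p (d ^ 2))) := by
    rw [← h.lintegral_div_sq hq hp]
    refine lintegral_congr_ae ?_
    filter_upwards [h.ae_ne_zero hq d] with x hx
    exact ENNReal.ofReal_div_of_pos (by positivity)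
  have hL : 0 ≤ L (Localization.mk p (d ^ 2)) :=
    ge_of_tendsto' (h.tendsto_integral_truncation hq hp) fun n =>
      integral_nonneg fun x => trunc_nonneg Nat.one_div_pos_of_nat.le (hp x)
  refine ⟨⟨hmeas, ?_⟩, ?_⟩
  · rw [hasFiniteIntegral_iff_ofReal (ae_of_all _ hnonneg), hlint]
    exact ENNReal.ofReal_lt_top
  · rw [integral_eq_lintegral_of_nonneg_ae (ae_of_all _ hnonneg) hmeas, hlint,
      ENNReal.toReal_ofReal hL]

theorem integral_div (h : IsJointlyPositive φ L μ) (hq : IsProperMap (φ q)) (a : A) (d : D) :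
    Integrable (fun x => φ a x / φ d x) μ ∧
      L (Localization.mk a d) = ∫ x, φ a x / φ d x ∂μ := by
  obtain ⟨hplus_int, hplus⟩ := h.integral_div_sq (d := d) (p := (a + d) ^ 2) hq fun x => by
    simpa using sq_nonneg _
  obtain ⟨hminus_int, hminus⟩ := h.integral_div_sq (d := d) (p := (a - d) ^ 2) hq fun x => by
    simpa using sq_nonneg _
  have hdiv : (fun x => φ a x / φ d x) = fun x =>
      (φ ((a + d) ^ 2) x / φ d x ^ 2 - φ ((a - d) ^ 2) x / φ d x ^ 2) / 4 := by
    ext x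
    simpa using div_eq_sub_sq_div_sq (φ a x) (φ d x)
  have hL : 4 * L (Localization.mk a d) =
      L (Localization.mk ((a + d) ^ 2) (d ^ 2)) - L (Localization.mk ((a - d) ^ 2) (d ^ 2)) := by
    rw [← map_sub, ← four_smul_mk_eq_sub_sq (R := ℝ), map_smul, smul_eq_mul]
  rw [hdiv, MeasureTheory.integral_div, integral_sub hplus_int hminus_int, hplus, hminus, ← hL]
  exact ⟨(hplus_int.sub hminus_int).div_const 4, by ring⟩

end IsJointlyPositive

end JointPositivity

end RationalHaviland

open RationalHaviland

theorem rational_haviland_general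
    {A : Type*} [CommRing A] [Algebra ℝ A] (D : Submonoid A)
    {X : Type*} [TopologicalSpace X] [T2Space X] [MeasurableSpace X] [BorelSpace X]
    (φ : A →ₐ[ℝ] C(X, ℝ)) (q : A) (hq : IsProperMap (φ q)) (L : Localization D →ₗ[ℝ] ℝ)
    (hL : ∀ (a : A) (d : D), (∀ x, 0 ≤ φ a x * φ (d : A) x) → 0 ≤ L (Localization.mk a d)) :
    ∃ μ : Measure X, μ.Regular ∧ (∀ d ∈ D, μ {x | φ d x = 0} = 0) ∧
      ∀ (a : A) (d : D),
        Integrable (fun x => φ a x / φ (d : A) x) μ ∧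
        L (Localization.mk a d) = ∫ x, φ a x / φ (d : A) x ∂μ := by
  have := locallyCompactSpace_of_isProperMap hq
  obtain ⟨μ, hμ, h⟩ := exists_regular_isJointlyPositive hL
  exact ⟨μ, hμ, fun d hd => by simpa [ae_iff] using h.ae_ne_zero hq ⟨d, hd⟩, h.integral_div hq⟩

/-- **Rational Haviland's Theorem.** -/
theorem rational_haviland
    {A : Type*} [CommRing A] [Algebra ℝ A] (D : Submonoid A)
    {X : Type*} [TopologicalSpace X] [T2Space X] [Nonempty X]
    [MeasurableSpace X] [BorelSpace X]
    (φ : A →ₐ[ℝ] C(X, ℝ))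
    (q : A) (hq0 : ∀ x, 0 ≤ φ q x)
    (hqc : ∀ k : ℕ, 1 ≤ k → IsCompact {x : X | φ q x ≤ (k : ℝ)})
    (hZ : ∀ d ∈ D, interior {x : X | φ d x = 0} = ∅)
    (hσ : ∀ O : Set X, IsOpen O →
      ∃ K : ℕ → Set X, (∀ i, IsCompact (K i)) ∧ O = ⋃ i, K i)
    (L : Localization D →ₗ[ℝ] ℝ)
    (hL : ∀ (a : A) (d : D), (∀ x, 0 ≤ φ a x * φ (d : A) x) →
      0 ≤ L (Localization.mk a d)) :
    ∃ μ : Measure X,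
      (∀ d ∈ D, μ {x | φ d x = 0} = 0) ∧
      ∀ (a : A) (d : D),
        Integrable (fun x => φ a x / φ (d : A) x) μ ∧
        L (Localization.mk a d) = ∫ x, φ a x / φ (d : A) x ∂μ := by
  obtain ⟨μ, -, hμ⟩ := rational_haviland_general D φ q
    (isProperMap_of_isCompact_le (φ q).continuous (eventually_atTop.mpr ⟨1, hqc⟩)) L hL
  exact ⟨μ, hμ⟩
end
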